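/- For every k ∈ ℕ there exist constants c_k, d_k ∈ ℕ such that for every w ∈ ℕ, every graph in obs_{≤si}(C_{w,k}) has at most c_k·w + d_k vertices. -/

import Mathlib

/-- A finite undirected multigraph without loops. -/
structure Multigraph where
  V : Type
  E : Type
  finV : Finite V
  finE : Finite E
  ends : E → V × V
  loopless : ∀ e, (ends e).1 ≠ (ends e).2

attribute [instance] Multigraph.finV Multigraph.finE

namespace Multigraph

/-- `δ_G(S)`: the number of edges of `G` with exactly one endpoint in `S`. -/
noncomputable def delta (G : Multigraph) (S : Set G.V) : ℕ :=
  {e : G.E | ¬ ((G.ends e).1 ∈ S ↔ (G.ends e).2 ∈ S)}.ncard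

/-- The width `cw_σ(G)` of an ordering, represented as an injective ranking `ρ : V → ℕ`. -/
noncomputable def cwOrd (G : Multigraph) (ρ : G.V → ℕ) : ℕ :=
  sSup {w | ∃ v : G.V, w = G.delta {u | ρ u ≤ ρ v}}

/-- The cutwidth of a multigraph. -/
noncomputable def cutwidth (G : Multigraph) : ℕ :=
  sInf {w | ∃ ρ : G.V → ℕ, Function.Injective ρ ∧ G.cwOrd ρ = w}

/-- Walks in a multigraph. -/
inductive Walk (G : Multigraph) : G.V → G.V → Type
  | nil (v : G.V) : Walk G v v
  | cons {u v w : G.V} (e : G.E)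
      (h : G.ends e = (u, v) ∨ G.ends e = (v, u)) (p : Walk G v w) : Walk G u w

namespace Walk

def edges {G : Multigraph} : ∀ {u v : G.V}, G.Walk u v → List G.E
  | _, _, .nil _ => []
  | _, _, .cons e _ p => e :: p.edges

def support {G : Multigraph} : ∀ {u v : G.V}, G.Walk u v → List G.V
  | _, _, .nil v => [v]
  | u, _, .cons _ _ p => u :: p.support

end Walk

def Connected (G : Multigraph) : Prop := ∀ u v : G.V, Nonempty (G.Walk u v)

/-- An immersion model of `H` in `G`. -/
structure ImmersionModel (H G : Multigraph) where
  vmap : H.V → G.V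
  inj : Function.Injective vmap
  emap : (e : H.E) → G.Walk (vmap (H.ends e).1) (vmap (H.ends e).2)
  isPath : ∀ e, ((emap e).support).Nodup
  edgeDisj : ∀ e e', e ≠ e' → ∀ f, f ∈ (emap e).edges → f ∉ (emap e').edges

/-- `H ≤_i G`. -/
def Immersion (H G : Multigraph) : Prop := Nonempty (ImmersionModel H G)

/-- A strong immersion model: no internal vertex of a path is a branch vertex. -/
structure StrongImmersionModel (H G : Multigraph) extends ImmersionModel H G where
  strong : ∀ e, ∀ x, x ∈ (emap e).support →
    x ≠ vmap (H.ends e).1 → x ≠ vmap (H.ends e).2 → x ∉ Set.range vmap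

/-- `H ≤_si G`. -/
def StrongImmersion (H G : Multigraph) : Prop := Nonempty (StrongImmersionModel H G)

/-- Isomorphism of multigraphs. -/
structure Iso (G H : Multigraph) where
  fv : G.V ≃ H.V
  fe : G.E ≃ H.E
  pres : ∀ e, H.ends (fe e) = (fv (G.ends e).1, fv (G.ends e).2)
           ∨ H.ends (fe e) = (fv (G.ends e).2, fv (G.ends e).1)

def Isomorphic (G H : Multigraph) : Prop := Nonempty (Iso G H)

/-- The minimal obstruction set of a class `C` with respect to a partial order `le`. -/
def obstructions (le : Multigraph → Multigraph → Prop) (C : Set Multigraph) :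
    Set Multigraph :=
  {G | G ∉ C ∧ ∀ G', le G' G → ¬ G'.Isomorphic G → G' ∈ C}

/-- `C_k`: the class of multigraphs of cutwidth at most `k`. -/
def cutwidthClass (k : ℕ) : Set Multigraph := {G | G.cutwidth ≤ k}

/-- The degree of a vertex (each parallel edge counts once at each endpoint). -/
noncomputable def degree (G : Multigraph) (v : G.V) : ℕ :=
  {e : G.E | (G.ends e).1 = v ∨ (G.ends e).2 = v}.ncard

/-- The number of `A`-blocks of an ordering `ρ`: the number of maximal runs of
consecutive (in `ρ`) vertices belonging to `A`, counted via block-starting vertices. -/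
noncomputable def blockCount (G : Multigraph) (ρ : G.V → ℕ) (A : Set G.V) : ℕ :=
  {v : G.V | v ∈ A ∧ ∀ u : G.V, ρ u < ρ v →
      ∃ w : G.V, w ∉ A ∧ ρ u ≤ ρ w ∧ ρ w < ρ v}.ncard

/-- The extension `G*` of a `k`-boundaried graph `(G, x)`. -/
def extension (G : Multigraph) {k : ℕ} (x : Fin k → G.V) : Multigraph where
  V := G.V ⊕ Fin k
  E := G.E ⊕ Fin k
  finV := inferInstance
  finE := inferInstance
  ends := Sum.elim (fun e => (Sum.inl (G.ends e).1, Sum.inl (G.ends e).2))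
                   (fun i => (Sum.inl (x i), Sum.inr i))
  loopless := by
    rintro (e | i)
    · simpa using G.loopless e
    · simp

/-- The join `𝐀 ⊕ 𝐁` of two `k`-boundaried graphs. -/
def join {k : ℕ} (A B : Multigraph) (x : Fin k → A.V) (y : Fin k → B.V) : Multigraph where
  V := A.V ⊕ B.V
  E := (A.E ⊕ B.E) ⊕ Fin k
  finV := inferInstance
  finE := inferInstance
  ends := Sum.elim
    (Sum.elim (fun e => (Sum.inl (A.ends e).1, Sum.inl (A.ends e).2))
              (fun e => (Sum.inr (B.ends e).1, Sum.inr (B.ends e).2)))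
    (fun i => (Sum.inl (x i), Sum.inr (y i)))
  loopless := by
    rintro ((e | e) | i)
    · simpa using A.loopless e
    · simpa using B.loopless e
    · simp

/-- An `ℓ`-bucketing of an ordering `ρ` (buckets indexed 1,…,ℓ). -/
def IsBucketing (G : Multigraph) (ρ : G.V → ℕ) (ℓ : ℕ) (T : G.V → ℕ) : Prop :=
  (∀ v, 1 ≤ T v ∧ T v ≤ ℓ) ∧ ∀ u v : G.V, ρ u ≤ ρ v → T u ≤ T v

/-- `width(G,σ,T,i)`: the maximum size of a cut in `cuts(G,σ,T,i)`; these cuts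
are described by their left side `S`, which contains all buckets before `i`,
a `σ`-downward-closed part of bucket `i`, and nothing else. -/
noncomputable def bucketWidth (G : Multigraph) (ρ : G.V → ℕ) (T : G.V → ℕ) (i : ℕ) : ℕ :=
  sSup {w | ∃ S : Set G.V,
    (∀ v, T v < i → v ∈ S) ∧ (∀ v ∈ S, T v ≤ i) ∧
    (∀ u v : G.V, T u = i → T v = i → ρ u ≤ ρ v → v ∈ S → u ∈ S) ∧
    w = G.delta S}

/-- A `(k,ℓ)`-bucket interface. -/
structure BucketInterface (k ℓ : ℕ) where
  b : Fin k → ℕ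
  b' : Fin k → ℕ
  mu : ℕ → ℕ
  mu' : ℕ → ℕ
  b_mem : ∀ i, b i ∈ Set.Icc 1 ℓ
  b'_mem : ∀ i, b' i ∈ Set.Icc 1 ℓ
  mu_le : ∀ j, mu j ≤ k
  mu'_le : ∀ j, mu' j ≤ k

/-- A `k`-boundaried graph `(G, x)` conforms with a `(k,ℓ)`-bucket interface. -/
def Conforms {k : ℕ} (G : Multigraph) (x : Fin k → G.V) (ℓ : ℕ)
    (I : BucketInterface k ℓ) : Prop :=
  ∃ ρ : (G.extension x).V → ℕ, Function.Injective ρ ∧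
  ∃ T : (G.extension x).V → ℕ, (G.extension x).IsBucketing ρ ℓ T ∧
    (∀ v : G.V, Odd (T (Sum.inl v))) ∧
    (∀ i : Fin k, Even (T (Sum.inr i))) ∧
    (∀ i : Fin k, T (Sum.inl (x i)) = I.b i) ∧
    (∀ i : Fin k, T (Sum.inr i) = I.b' i) ∧
    (∀ j ∈ Set.Icc 1 ℓ,
      G.bucketWidth (fun v => ρ (Sum.inl v)) (fun v => T (Sum.inl v)) j ≤ I.mu j) ∧
    (∀ j ∈ Set.Icc 1 ℓ, (G.extension x).bucketWidth ρ T j ≤ I.mu' j)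

/-- `m` pairwise edge-disjoint paths between the sets `X` and `Y`. -/
def ConnectorBetween (G : Multigraph) (X Y : Set G.V) (m : ℕ) : Prop :=
  ∃ (s t : Fin m → G.V) (P : (i : Fin m) → G.Walk (s i) (t i)),
    (∀ i, s i ∈ X) ∧ (∀ i, t i ∈ Y) ∧ (∀ i, (P i).support.Nodup) ∧
    ∀ i j, i ≠ j → ∀ f, f ∈ (P i).edges → f ∉ (P j).edges

/-- A linked ordering. -/
def Linked (G : Multigraph) (ρ : G.V → ℕ) : Prop :=
  ∀ u u' : G.V, ρ u ≤ ρ u' →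
    G.ConnectorBetween {z | ρ z ≤ ρ u} {z | ¬ ρ z ≤ ρ u'}
      (sInf {w | ∃ v : G.V, ρ u ≤ ρ v ∧ ρ v ≤ ρ u' ∧ w = G.delta {z | ρ z ≤ ρ v}})

/-- The multigraph obtained by deleting a set of edges. -/
def deleteEdges (G : Multigraph) (F : Set G.E) : Multigraph where
  V := G.V
  E := {e : G.E // e ∉ F}
  finV := G.finV
  finE := inferInstance
  ends e := G.ends e.1
  loopless e := G.loopless e.1

/-- `dcw_k(G)`: minimum number of edges to delete to reach cutwidth at most `k`. -/
noncomputable def dcw (k : ℕ) (G : Multigraph) : ℕ :=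
  sInf {w | ∃ F : Set G.E, (G.deleteEdges F).cutwidth ≤ k ∧ F.ncard = w}

/-- The class `C_{w,k}`. -/
def dcwClass (w k : ℕ) : Set Multigraph := {G | dcw k G ≤ w}

/-- Induced subgraph `G[X]`. -/
def induce (G : Multigraph) (X : Set G.V) : Multigraph where
  V := X
  E := {e : G.E // (G.ends e).1 ∈ X ∧ (G.ends e).2 ∈ X}
  finV := inferInstance
  finE := inferInstance
  ends e := (⟨(G.ends e.1).1, e.2.1⟩, ⟨(G.ends e.1).2, e.2.2⟩)
  loopless := by
    intro e h
    exact G.loopless e.1 (Subtype.ext_iff.mp h)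

/-- A graph is `ℋ`-immersion-free if it contains no member of `ℋ` as an immersion. -/
def ImmersionFree (H : Set Multigraph) (G : Multigraph) : Prop :=
  ∀ X ∈ H, ¬ Immersion X G

/-- `aic_ℋ(G)`: minimum number of edge deletions to reach an `ℋ`-immersion-free graph. -/
noncomputable def aic (H : Set Multigraph) (G : Multigraph) : ℕ :=
  sInf {w | ∃ F : Set G.E, ImmersionFree H (G.deleteEdges F) ∧ F.ncard = w}

/-- The class `C_{w,ℋ}`. -/
def aicClass (w : ℕ) (H : Set Multigraph) : Set Multigraph := {G | aic H G ≤ w}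

/-- `ℋ` is a `≤_i`-antichain. -/
def IsAntichainImm (H : Set Multigraph) : Prop :=
  ∀ G₁ ∈ H, ∀ G₂ ∈ H, Immersion G₁ G₂ → Isomorphic G₁ G₂

/-- Disjoint union of two multigraphs. -/
def disjUnion (G H : Multigraph) : Multigraph where
  V := G.V ⊕ H.V
  E := G.E ⊕ H.E
  finV := inferInstance
  finE := inferInstance
  ends := Sum.elim (fun e => (Sum.inl (G.ends e).1, Sum.inl (G.ends e).2))
                   (fun e => (Sum.inr (H.ends e).1, Sum.inr (H.ends e).2))
  loopless := by
    rintro (e | e)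
    · simpa using G.loopless e
    · simpa using H.loopless e

/-- Disjoint union of a finite family of multigraphs. -/
def sigmaUnion {m : ℕ} (Gs : Fin m → Multigraph) : Multigraph where
  V := Σ i, (Gs i).V
  E := Σ i, (Gs i).E
  finV := inferInstance
  finE := inferInstance
  ends e := (⟨e.1, ((Gs e.1).ends e.2).1⟩, ⟨e.1, ((Gs e.1).ends e.2).2⟩)
  loopless := by
    intro e h
    exact (Gs e.1).loopless e.2 (by simpa using h)

/-- `cw_σ(G,X) = δ_G(X) + cw_{σ_X}(G[X])`. -/
noncomputable def cwRel (G : Multigraph) (ρ : G.V → ℕ) (X : Set G.V) : ℕ :=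
  G.delta X + (G.induce X).cwOrd (fun v => ρ v.val)

/-- Membership in the family of prefixes relevant to `X`-linkedness: the complement
of `X` (the prefix right before `X` starts) and the prefixes ending inside `X`. -/
def IsXPrefix (G : Multigraph) (ρ : G.V → ℕ) (X : Set G.V) (P : Set G.V) : Prop :=
  P = Xᶜ ∨ ∃ v ∈ X, P = {z | ρ z ≤ ρ v}

/-- An `X`-linked ordering. -/
def XLinked (G : Multigraph) (ρ : G.V → ℕ) (X : Set G.V) : Prop :=
  (∀ u v : G.V, u ∉ X → v ∈ X → ρ u < ρ v) ∧
  ∀ P P' : Set G.V, G.IsXPrefix ρ X P → G.IsXPrefix ρ X P' → P ⊆ P' →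
    G.ConnectorBetween P P'ᶜ
      (sInf {w | ∃ Q : Set G.V, G.IsXPrefix ρ X Q ∧ P ⊆ Q ∧ Q ⊆ P' ∧ w = G.delta Q})

end Multigraph


namespace Multigraph

/-- Number of edges outside `F` crossing `S`. -/
noncomputable def cut (G : Multigraph) (F : Set G.E) (S : Set G.V) : ℕ :=
  {e : G.E | e ∉ F ∧ ¬ ((G.ends e).1 ∈ S ↔ (G.ends e).2 ∈ S)}.ncard

/-- All cuts met while adding the vertices of the list to `S` are at most `k`. -/
def OK (G : Multigraph) (F : Set G.E) (k : ℕ) : Set G.V → List G.V → Prop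
  | S, [] => G.cut F S ≤ k
  | S, v :: l => G.cut F S ≤ k ∧ OK G F k (insert v S) l

/-- A layout of `G` minus `F` of width at most `k`. -/
def Lay (G : Multigraph) (F : Set G.E) (k : ℕ) : Prop :=
  ∃ l : List G.V, (∀ v, v ∈ l) ∧ OK G F k ∅ l

lemma delta_eq_cut (G : Multigraph) (S : Set G.V) : G.delta S = G.cut ∅ S := by
  simp [delta, cut]

lemma delta_deleteEdges (G : Multigraph) (F : Set G.E) (S : Set G.V) :
    (G.deleteEdges F).delta S = G.cut F S := by
  have h := Set.ncard_image_of_injective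
    {e : {e : G.E // e ∉ F} | ¬ ((G.ends e.1).1 ∈ S ↔ (G.ends e.1).2 ∈ S)}
    (Subtype.val_injective (p := fun e => e ∉ F))
  refine Eq.trans h.symm ?_
  unfold cut
  congr 1
  ext e
  simp only [Set.mem_image, Set.mem_ofPred_eq, Subtype.exists, exists_and_right,
    exists_eq_right]
  constructor
  · rintro ⟨h, h'⟩; exact ⟨h, h'⟩
  · rintro ⟨h, h'⟩; exact ⟨h, h'⟩

lemma cut_empty (G : Multigraph) (F : Set G.E) : G.cut F ∅ = 0 := by simp [cut]

lemma cut_univ (G : Multigraph) (F : Set G.E) : G.cut F Set.univ = 0 := by simp [cut]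

lemma OK.head {G : Multigraph} {F : Set G.E} {k : ℕ} {S : Set G.V} {l : List G.V}
    (h : OK G F k S l) : G.cut F S ≤ k := by
  cases l with
  | nil => exact h
  | cons v l => exact h.1

lemma OK.take {G : Multigraph} {F : Set G.E} {k : ℕ} {S : Set G.V} {l : List G.V}
    (h : OK G F k S l) (n : ℕ) : G.cut F (S ∪ {v | v ∈ l.take n}) ≤ k := by
  induction l generalizing S n with
  | nil => simpa using h.head
  | cons v l ih =>
    cases n with
    | zero => simpa using h.head
    | succ n =>
      have := ih h.2 n
      convert this using 2
      ext u
      simp [or_assoc, or_comm, or_left_comm]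

lemma lay_of_rank (G : Multigraph) (F : Set G.E) (k : ℕ) (ρ : G.V → ℕ)
    (hρ : Function.Injective ρ) (h : ∀ t, G.cut F {v | ρ v < t} ≤ k) : Lay G F k := by
  obtain ⟨N, hN⟩ : ∃ N, ∀ v, ρ v < N := by
    obtain ⟨N, hN⟩ := (Set.finite_range ρ).bddAbove
    exact ⟨N + 1, fun v => Nat.lt_succ_of_le (hN ⟨v, rfl⟩)⟩
  have key : ∀ d t, t + d = N → ∃ l : List G.V, OK G F k {v | ρ v < t} l ∧
      ∀ v, t ≤ ρ v → v ∈ l := by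
    intro d
    induction d with
    | zero =>
      intro t ht
      refine ⟨[], h t, fun v hv => ?_⟩
      have := hN v
      omega
    | succ d ih =>
      intro t ht
      obtain ⟨l, hl, hl'⟩ := ih (t + 1) (by omega)
      by_cases hv : ∃ v, ρ v = t
      · obtain ⟨v, hv⟩ := hv
        refine ⟨v :: l, ⟨h t, ?_⟩, ?_⟩
        · convert hl using 1
          ext u
          simp only [Set.mem_insert_iff, Set.mem_ofPred_eq]
          constructor
          · rintro (rfl | h') <;> omega
          · intro h'
            by_cases h2 : ρ u = t
            · left; exact hρ (h2.trans hv.symm)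
            · right; omega
        · intro u hu
          by_cases h2 : ρ u = t
          · simp [hρ (h2.trans hv.symm)]
          · exact List.mem_cons_of_mem _ (hl' u (by omega))
      · refine ⟨l, ?_, fun u hu => hl' u ?_⟩
        · convert hl using 1
          ext u
          simp only [Set.mem_ofPred_eq]
          have : ρ u ≠ t := fun h' => hv ⟨u, h'⟩
          omega
        · have : ρ u ≠ t := fun h' => hv ⟨u, h'⟩
          omega
  obtain ⟨l, hl, hl'⟩ := key N 0 (by omega)
  exact ⟨l, fun v => hl' v (Nat.zero_le _), by simpa using hl⟩

lemma rank_of_cutwidth (G : Multigraph) (F : Set G.E) (k : ℕ)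
    (h : (G.deleteEdges F).cutwidth ≤ k) : ∃ ρ : G.V → ℕ, Function.Injective ρ ∧
      ∀ t, G.cut F {v | ρ v < t} ≤ k := by
  classical
  have hne : {w | ∃ ρ : (G.deleteEdges F).V → ℕ, Function.Injective ρ ∧
      (G.deleteEdges F).cwOrd ρ = w}.Nonempty := by
    obtain ⟨f, hf⟩ := exists_injective_nat (G.deleteEdges F).V
    exact ⟨_, f, hf, rfl⟩
  obtain ⟨ρ, hρ, hw⟩ := Nat.sInf_mem hne
  refine ⟨ρ, hρ, fun t => ?_⟩
  have hle : (G.deleteEdges F).cwOrd ρ ≤ k := by rw [hw]; exact h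
  have hv : ∀ v : G.V, G.cut F {u | ρ u ≤ ρ v} ≤ k := by
    intro v
    refine le_trans ?_ hle
    unfold cwOrd
    refine le_csSup ?_ ⟨v, (delta_deleteEdges G F _).symm⟩
    have : {w | ∃ v : (G.deleteEdges F).V, w = (G.deleteEdges F).delta {u | ρ u ≤ ρ v}} =
      Set.range (fun v : (G.deleteEdges F).V => (G.deleteEdges F).delta {u | ρ u ≤ ρ v}) := by
      ext w; simp [eq_comm]
    rw [this]
    exact (Set.finite_range _).bddAbove
  by_cases hex : ∃ v, ρ v < t
  · obtain ⟨v, hvt, hmax⟩ := Set.exists_max_image {v : G.V | ρ v < t} ρ (Set.toFinite _) hex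
    convert hv v using 2
    ext u
    exact ⟨fun hu => hmax u hu, fun hu => show ρ u < t from lt_of_le_of_lt (show ρ u ≤ ρ v from hu) hvt⟩
  · have : {v : G.V | ρ v < t} = ∅ := by
      ext u; simp only [Set.mem_ofPred_eq, Set.mem_empty_iff_false, iff_false]
      exact fun hu => hex ⟨u, hu⟩
    rw [this, cut_empty]
    exact Nat.zero_le _

lemma cutwidth_of_lay (G : Multigraph) (F : Set G.E) (k : ℕ) (h : Lay G F k) :
    (G.deleteEdges F).cutwidth ≤ k := by
  classical
  obtain ⟨l, hl, hok⟩ := h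
  let ρ : G.V → ℕ := fun v => l.idxOf v
  have hinj : Function.Injective ρ := fun a b hab => (List.idxOf_inj (hl a)).1 hab
  have : (G.deleteEdges F).cwOrd ρ ≤ k := by
    apply csSup_le'
    rintro w ⟨v, rfl⟩
    refine (delta_deleteEdges G F _).trans_le ?_
    have hS : ({u | ρ u ≤ ρ v} : Set G.V) = ∅ ∪ {u | u ∈ l.take (ρ v + 1)} := ?_
    · exact (congrArg (G.cut F) hS).trans_le (hok.take (ρ v + 1))
    ext u
    simp only [Set.mem_ofPred_eq, Set.empty_union]
    rw [List.mem_take_iff_idxOf_lt (hl u)]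
    simp only [ρ]
    omega
  exact le_trans (Nat.sInf_le ⟨ρ, hinj, rfl⟩) this

lemma dcw_le_of (G : Multigraph) (k w : ℕ) (F : Set G.E) (hF : F.ncard ≤ w) (h : Lay G F k) :
    dcw k G ≤ w :=
  le_trans (Nat.sInf_le ⟨F, cutwidth_of_lay G F k h, rfl⟩) hF

lemma exists_of_dcw_le (G : Multigraph) (k w : ℕ) (h : dcw k G ≤ w) :
    ∃ F : Set G.E, F.ncard ≤ w ∧ ∃ ρ : G.V → ℕ, Function.Injective ρ ∧
      ∀ t, G.cut F {v | ρ v < t} ≤ k := by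
  have hne : {w | ∃ F : Set G.E, (G.deleteEdges F).cutwidth ≤ k ∧ F.ncard = w}.Nonempty := by
    refine ⟨_, Set.univ, ?_, rfl⟩
    apply cutwidth_of_lay
    obtain ⟨f, hf⟩ := exists_injective_nat G.V
    exact lay_of_rank _ _ _ f hf (fun t => by simp [cut])
  obtain ⟨F, hF, hw⟩ := Nat.sInf_mem hne
  exact ⟨F, hw.trans_le h, rank_of_cutwidth G F k hF⟩

lemma ncard_sum {α β : Type*} [Finite α] [Finite β] (s : Set (α ⊕ β)) :
    s.ncard = (Sum.inl ⁻¹' s).ncard + (Sum.inr ⁻¹' s).ncard := by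
  rw [← Set.ncard_image_of_injective (Sum.inl ⁻¹' s) (Sum.inl_injective (β := β)),
    ← Set.ncard_image_of_injective (Sum.inr ⁻¹' s) (Sum.inr_injective (α := α)),
    ← Set.ncard_union_eq]
  · congr 1
    ext (a | b) <;> simp
  · rw [Set.disjoint_left]
    rintro _ ⟨a, _, rfl⟩ ⟨b, _, h⟩
    simp at h

/-- Transfer of layouts along a bijection on vertices and a surjection on edges. -/
lemma lay_transfer (H G : Multigraph) (k : ℕ) (fv : H.V → G.V) (fe : H.E → G.E)
    (hfv : Function.Bijective fv) (hfe : Function.Surjective fe)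
    (hends : ∀ e, G.ends (fe e) = (fv (H.ends e).1, fv (H.ends e).2) ∨
      G.ends (fe e) = (fv (H.ends e).2, fv (H.ends e).1))
    (F : Set H.E) (h : Lay H F k) : Lay G (fe '' F) k := by
  obtain ⟨l, hl, hok⟩ := h
  have hcut : ∀ S : Set H.V, G.cut (fe '' F) (fv '' S) ≤ H.cut F S := by
    intro S
    unfold cut
    refine le_trans (Set.ncard_le_ncard (t := fe '' {e | e ∉ F ∧
      ¬((H.ends e).1 ∈ S ↔ (H.ends e).2 ∈ S)}) ?_ (Set.toFinite _)) (Set.ncard_image_le (Set.toFinite _))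
    rintro e ⟨heF, hc⟩
    obtain ⟨e', rfl⟩ := hfe e
    refine ⟨e', ⟨fun h' => heF ⟨e', h', rfl⟩, ?_⟩, rfl⟩
    rcases hends e' with h' | h' <;> rw [h'] at hc <;>
      simp only [hfv.injective.mem_set_image] at hc
    · exact hc
    · exact fun h => hc h.symm
  have key : ∀ (l : List H.V) (S : Set H.V), OK H F k S l →
      OK G (fe '' F) k (fv '' S) (l.map fv) := by
    intro l
    induction l with
    | nil => intro S h; exact le_trans (hcut S) h
    | cons v l ih =>
      intro S h
      refine ⟨le_trans (hcut S) h.1, ?_⟩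
      have := ih _ h.2
      rwa [Set.image_insert_eq] at this
  refine ⟨l.map fv, fun v => ?_, ?_⟩
  · obtain ⟨u, rfl⟩ := hfv.surjective v
    exact List.mem_map_of_mem (hl u)
  · simpa using key l ∅ hok

end Multigraph

namespace Multigraph

/-- A monotone staircase walk through the grid given by two words, all of whose
cells are compatible. -/
inductive Merge {α : Type} : List α → List (α → Prop) → Prop
  | single {a : α} {b : α → Prop} : b a → Merge [a] [b]
  | left {a a' : α} {as : List α} {b : α → Prop} {bs : List (α → Prop)} :
      b a → Merge (a' :: as) (b :: bs) → Merge (a :: a' :: as) (b :: bs)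
  | right {a : α} {as : List α} {b b' : α → Prop} {bs : List (α → Prop)} :
      b a → Merge (a :: as) (b' :: bs) → Merge (a :: as) (b :: b' :: bs)

lemma Merge.split {α : Type} {l : List α} {bs : List (α → Prop)} (h : Merge l bs) :
    ∀ a as a' as', l = (a :: as) ++ (a' :: as') → ∃ b1 b b2, bs = b1 ++ b :: b2 ∧
      Merge (a :: as) (b1 ++ [b]) ∧ Merge (a' :: as') (b :: b2) := by
  induction h with
  | single h => intro a as a' as' hl; simp at hl
  | @left a0 a0' as0 b bs h hm ih =>
    intro a as a' as' hl
    cases as with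
    | nil =>
      simp only [List.cons_append, List.nil_append, List.cons.injEq] at hl
      obtain ⟨rfl, rfl, rfl⟩ := hl
      exact ⟨[], b, bs, rfl, .single h, hm⟩
    | cons c as =>
      simp only [List.cons_append, List.cons.injEq] at hl
      obtain ⟨rfl, rfl, rfl⟩ := hl
      obtain ⟨b1, b', b2, he, h1, h2⟩ := ih a0' as a' as' rfl
      refine ⟨b1, b', b2, he, ?_, h2⟩
      cases b1 with
      | nil => 
        simp only [List.nil_append, List.cons.injEq] at he
        obtain ⟨rfl, rfl⟩ := he
        exact .left h h1
      | cons d b1 =>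
        simp only [List.cons_append, List.cons.injEq] at he
        obtain ⟨rfl, rfl⟩ := he
        exact .left h h1
  | @right a0 as0 b b' bs h hm ih =>
    intro a as a' as' hl
    obtain ⟨b1, b'', b2, he, h1, h2⟩ := ih a as a' as' hl
    simp only [List.cons_append, List.cons.injEq] at hl
    obtain ⟨rfl, rfl⟩ := hl
    refine ⟨b :: b1, b'', b2, by rw [he]; rfl, ?_, h2⟩
    cases b1 with
    | nil => exact .right h h1
    | cons d b1 => exact .right h h1

lemma Merge.append {α : Type} {as : List α} {bs : List (α → Prop)} (h : Merge as bs) :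
    ∀ b1 b b2 a' as', bs = b1 ++ [b] → Merge (a' :: as') (b :: b2) →
      Merge (as ++ a' :: as') (b1 ++ b :: b2) := by
  induction h with
  | @single a b0 h =>
    intro b1 b b2 a' as' he hm
    cases b1 with
    | nil =>
      simp only [List.nil_append, List.cons.injEq, and_true] at he
      subst he
      exact .left h hm
    | cons d b1 => simp at he
  | @left a0 a0' as0 b0 bs h hm ih =>
    intro b1 b b2 a' as' he hm'
    have := ih b1 b b2 a' as' he hm'
    cases b1 with
    | nil =>
      simp only [List.nil_append, List.cons.injEq] at he
      obtain ⟨rfl, rfl⟩ := he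
      exact .left h this
    | cons d b1 =>
      simp only [List.cons_append, List.cons.injEq] at he
      obtain ⟨rfl, rfl⟩ := he
      exact .left h this
  | @right a0 as0 b0 b0' bs h hm ih =>
    intro b1 b b2 a' as' he hm'
    cases b1 with
    | nil => simp at he
    | cons d b1 =>
      simp only [List.cons_append, List.cons.injEq] at he
      obtain ⟨rfl, he⟩ := he
      have := ih b1 b b2 a' as' he hm'
      cases b1 with
      | nil =>
        simp only [List.nil_append, List.cons.injEq] at he
        obtain ⟨rfl, rfl⟩ := he
        exact .right h this
      | cons d b1 =>
        simp only [List.cons_append, List.cons.injEq] at he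
        obtain ⟨rfl, rfl⟩ := he
        exact .right h this

lemma Merge.exists_left {α : Type} {as : List α} {bs : List (α → Prop)} (h : Merge as bs) :
    ∀ b ∈ bs, ∃ a ∈ as, b a := by
  induction h with
  | single h => simpa using h
  | left h hm ih =>
    intro b hb
    obtain ⟨a, ha, hab⟩ := ih b hb
    exact ⟨a, List.mem_cons_of_mem _ ha, hab⟩
  | right h hm ih =>
    intro b hb
    rcases List.mem_cons.1 hb with rfl | hb
    · exact ⟨_, List.mem_cons_self, h⟩
    · exact ih b hb

lemma Merge.exists_right {α : Type} {as : List α} {bs : List (α → Prop)} (h : Merge as bs) :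
    ∀ a ∈ as, ∃ b ∈ bs, b a := by
  induction h with
  | single h => simpa using h
  | right h hm ih =>
    intro b hb
    obtain ⟨a, ha, hab⟩ := ih b hb
    exact ⟨a, List.mem_cons_of_mem _ ha, hab⟩
  | left h hm ih =>
    intro b hb
    rcases List.mem_cons.1 hb with rfl | hb
    · exact ⟨_, List.mem_cons_self, h⟩
    · exact ih b hb

lemma Merge.cons_right {α : Type} {a : α} {as : List α} {bs : List (α → Prop)}
    (h : Merge (a :: as) bs) (b : α → Prop) (hb : b a) : Merge (a :: as) (b :: bs) := by
  cases bs with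
  | nil => cases h
  | cons b' bs => exact .right hb h

lemma Merge.cons_left {α : Type} {a : α} {as : List α} {b : α → Prop} {bs : List (α → Prop)}
    (h : Merge as (b :: bs)) (hb : b a) : Merge (a :: as) (b :: bs) := by
  cases as with
  | nil => cases h
  | cons b' bs => exact .left hb h

lemma Merge.prepend {α : Type} {a : α} {as : List α} {b' : α → Prop} {bs : List (α → Prop)}
    (b1 : List (α → Prop)) (hb : ∀ b ∈ b1, b a) (h : Merge (a :: as) (b' :: bs)) :
    Merge (a :: as) (b1 ++ b' :: bs) := by
  induction b1 with
  | nil => exact h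
  | cons d b1 ih =>
    exact (ih (fun b hb' => hb b (List.mem_cons_of_mem _ hb'))).cons_right d
      (hb d List.mem_cons_self)

lemma merge_one_right {α : Type} {b : α → Prop} (a : α) (as : List α)
    (h : ∀ x ∈ a :: as, b x) : Merge (a :: as) [b] := by
  induction as generalizing a with
  | nil => exact .single (h a (by simp))
  | cons a' as ih => exact .left (h a (by simp)) (ih a' (fun x hx => h x (by simp at hx ⊢; tauto)))

lemma merge_one_left {α : Type} {a : α} (b : α → Prop) (bs : List (α → Prop))
    (h : ∀ x ∈ b :: bs, x a) : Merge [a] (b :: bs) := by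
  induction bs generalizing b with
  | nil => exact .single (h b (by simp))
  | cons a' as ih => exact .right (h b (by simp)) (ih a' (fun x hx => h x (by simp at hx ⊢; tauto)))

/-- A predicate closed downwards for `le`. -/
def DC {α : Type} (le : α → α → Prop) (b : α → Prop) : Prop := ∀ u v, le u v → b v → b u

/-- Contextual equivalence of words. -/
def WEq {α : Type} (le : α → α → Prop) (a a' : List α) : Prop :=
  ∀ xs ys bs, (∀ b ∈ bs, DC le b) → (Merge (xs ++ a ++ ys) bs ↔ Merge (xs ++ a' ++ ys) bs)

lemma WEq.refl {α : Type} (le : α → α → Prop) (a : List α) : WEq le a a :=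
  fun _ _ _ _ => Iff.rfl

lemma WEq.symm {α : Type} {le : α → α → Prop} {a b : List α} (h : WEq le a b) : WEq le b a :=
  fun xs ys bs hb => (h xs ys bs hb).symm

lemma WEq.trans {α : Type} {le : α → α → Prop} {a b c : List α} (h : WEq le a b)
    (h' : WEq le b c) : WEq le a c :=
  fun xs ys bs hb => (h xs ys bs hb).trans (h' xs ys bs hb)

lemma WEq.append {α : Type} {le : α → α → Prop} {a b c d : List α} (h : WEq le a b)
    (h' : WEq le c d) : WEq le (a ++ c) (b ++ d) := by
  intro xs ys bs hb
  have h1 := h xs (c ++ ys) bs hb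
  have h2 := h' (xs ++ b) ys bs hb
  simp only [List.append_assoc] at h1 h2 ⊢
  exact h1.trans h2

lemma WEq.merge {α : Type} {le : α → α → Prop} {a a' : List α} (h : WEq le a a')
    {bs : List (α → Prop)} (hb : ∀ b ∈ bs, DC le b) (hm : Merge a bs) : Merge a' bs := by
  have := (h [] [] bs hb).1 (by simpa using hm)
  simpa using this

lemma weq_reduce {α : Type} {le : α → α → Prop} (u v : α) (mid : List α)
    (hmid : (∀ z ∈ mid, le u z ∧ le z v) ∨ (∀ z ∈ mid, le v z ∧ le z u)) :
    WEq le (u :: (mid ++ [v])) [u, v] := by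
  cases mid with
  | nil => exact WEq.refl _ _
  | cons c mid =>
  intro xs ys bs hbs
  have e1 : xs ++ u :: (c :: mid ++ [v]) ++ ys = (xs ++ [u]) ++ ((c :: mid) ++ (v :: ys)) := by simp
  have e2 : xs ++ [u, v] ++ ys = (xs ++ [u]) ++ (v :: ys) := by simp
  rw [e1, e2]
  obtain ⟨x, xs', hx⟩ : ∃ x xs', xs ++ [u] = x :: xs' := by cases xs <;> simp
  constructor
  · intro h
    rw [hx] at h
    obtain ⟨b1, b, b2, rfl, h1, h2⟩ := h.split x xs' c (mid ++ v :: ys) rfl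
    obtain ⟨b3, b', b4, he, h3, h4⟩ := h2.split c mid v ys rfl
    have hex := h3.exists_left
    have hmem : ∀ d ∈ b3 ++ [b'], d ∈ b1 ++ b :: b2 := by
      intro d hd
      rw [he]; simp at hd ⊢; tauto
    rw [he]
    rcases hmid with hmid | hmid
    · -- `u` is best: traverse with `u`
      have hu : ∀ d ∈ b3 ++ [b'], d u := by
        intro d hd
        obtain ⟨a, ha, hda⟩ := hex d hd
        exact hbs d (hmem d hd) _ _ (hmid a ha).1 hda
      cases xs with
      | nil =>
        simp only [List.nil_append, List.cons.injEq] at hx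
        obtain ⟨rfl, rfl⟩ := hx
        have h5 : Merge [u] (b1 ++ (b3 ++ [b'])) := by
          obtain ⟨d, ds, hd⟩ : ∃ d ds, b3 ++ [b'] = d :: ds := by cases b3 <;> simp
          rw [hd]
          apply Merge.prepend
          · intro d' hd'
            obtain ⟨a, ha, hda⟩ := h1.exists_left d' (by simp [hd'])
            simp at ha; subst ha; exact hda
          · exact merge_one_left (a := u) d ds (by rw [← hd]; exact hu)
        have := h5.append (b1 ++ b3) b' b4 v ys (by simp) h4
        simpa using this
      | cons y xs =>
        have h1' : Merge ((y :: xs) ++ [u]) (b1 ++ [b]) := by rw [hx]; exact h1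
        obtain ⟨c1, c', c2, hce, hc1, hc2⟩ := h1'.split y xs u [] rfl
        -- extend the traversal by `u`
        have h5 : Merge [u] (c' :: c2 ++ (b3 ++ [b']).tail) := by
          apply merge_one_left
          intro d hd
          have : d ∈ c' :: c2 ∨ d ∈ b3 ++ [b'] := by
            rcases List.mem_append.1 (show d ∈ (c' :: c2) ++ (b3 ++ [b']).tail from hd) with h | h
            · exact .inl h
            · exact .inr (List.mem_of_mem_tail h)
          rcases this with h | h
          · obtain ⟨a, ha, hda⟩ := hc2.exists_left d h
            simp at ha; subst ha; exact hda
          · exact hu d h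
        have h6 := hc1.append c1 c' _ u [] rfl h5
        have h7 : c1 ++ c' :: (c2 ++ (b3 ++ [b']).tail) = b1 ++ b3 ++ [b'] := by
          have hhead : b3 ++ [b'] = b :: (b3 ++ [b']).tail := by
            cases b3 with
            | nil => simp at he ⊢; exact he.1.symm
            | cons d b3 => simp at he ⊢; exact he.1.symm
          calc c1 ++ c' :: (c2 ++ (b3 ++ [b']).tail) = (c1 ++ c' :: c2) ++ (b3 ++ [b']).tail := by simp
            _ = b1 ++ [b] ++ (b3 ++ [b']).tail := by rw [← hce]
            _ = b1 ++ (b :: (b3 ++ [b']).tail) := by simp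
            _ = b1 ++ (b3 ++ [b']) := by rw [← hhead]
            _ = _ := by simp
        have h8 := h6.append (b1 ++ b3) b' b4 v ys h7 h4
        simpa using h8
    · have hv : ∀ d ∈ b3 ++ [b'], d v := by
        intro d hd
        obtain ⟨a, ha, hda⟩ := hex d hd
        exact hbs d (hmem d hd) _ _ (hmid a ha).1 hda
      have h5 : Merge (v :: ys) (b3 ++ b' :: b4) :=
        Merge.prepend b3 (fun d hd => hv d (by simp [hd])) h4
      rw [← he] at h5 ⊢
      rw [hx]
      exact h1.append b1 b b2 v ys rfl h5
  · intro h
    rw [hx] at h ⊢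
    obtain ⟨b1, b, b2, rfl, h1, h2⟩ := h.split x xs' v ys rfl
    have hDC := hbs b (by simp)
    have hv : b v := by
      cases h2 with
      | single h' => exact h'
      | left h' _ => exact h'
      | right h' _ => exact h'
    have hu : b u := by
      cases xs with
      | nil =>
        simp only [List.nil_append, List.cons.injEq] at hx
        obtain ⟨rfl, rfl⟩ := hx
        obtain ⟨a, ha, hda⟩ := h1.exists_left b (by simp)
        simp at ha; subst ha; exact hda
      | cons y xs =>
        have h1' : Merge ((y :: xs) ++ [u]) (b1 ++ [b]) := by rw [hx]; exact h1
        obtain ⟨c1, c', c2, hce, hc1, hc2⟩ := h1'.split y xs u [] rfl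
        have hb : b ∈ c' :: c2 := by
          have := congrArg List.getLast? hce
          simp [List.getLast?_append, List.getLast?_cons] at this
          rw [this]
          rcases List.eq_nil_or_concat c2 with rfl | ⟨d, z, rfl⟩ <;> simp
        obtain ⟨a, ha, hda⟩ := hc2.exists_left b hb
        simp at ha; subst ha; exact hda
    have hz : ∀ z ∈ c :: mid, b z := by
      intro z hz
      rcases hmid with hmid | hmid
      · exact hDC _ _ (hmid z hz).2 hv
      · exact hDC _ _ (hmid z hz).2 hu
    have h3 := (merge_one_right c mid hz).append [] b b2 v ys rfl h2
    exact h1.append b1 b b2 c _ rfl h3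

end Multigraph

namespace Multigraph

/-- Letters: a (truncated) cut value and a set of boundary labels. -/
abbrev Letter (k m : ℕ) : Type := Fin (k + 2) × Finset (Fin m)

/-- Comparison of letters. -/
def lle {k m : ℕ} (a b : Letter k m) : Prop := a.1 ≤ b.1 ∧ a.2 = b.2

lemma exists_first {α : Type} (P : α → Prop) (l : List α) (h : ∃ a ∈ l, P a) :
    ∃ p a s, l = p ++ a :: s ∧ P a ∧ ∀ x ∈ p, ¬ P x := by
  classical
  induction l with
  | nil => simp at h
  | cons c l ih =>
    by_cases hc : P c
    · exact ⟨[], c, l, rfl, hc, by simp⟩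
    · obtain ⟨p, a, s, rfl, ha, hp⟩ := ih (by
        obtain ⟨a, ha, hPa⟩ := h
        rcases List.mem_cons.1 ha with rfl | ha
        · exact absurd hPa hc
        · exact ⟨a, ha, hPa⟩)
      refine ⟨c :: p, a, s, rfl, ha, ?_⟩
      intro x hx
      rcases List.mem_cons.1 hx with rfl | hx
      · exact hc
      · exact hp x hx

lemma exists_last {α : Type} (P : α → Prop) (l : List α) (h : ∃ a ∈ l, P a) :
    ∃ p a s, l = p ++ a :: s ∧ P a ∧ ∀ x ∈ s, ¬ P x := by
  obtain ⟨p, a, s, hl, ha, hp⟩ := exists_first P l.reverse (by simpa using h)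
  refine ⟨s.reverse, a, p.reverse, ?_, ha, by simpa using hp⟩
  have := congrArg List.reverse hl
  simpa using this

/-- Length bound for words over a chain. -/
def fb : ℕ → ℕ
  | 0 => 0
  | n + 1 => 2 * fb n + 3

lemma fb_mono (n : ℕ) : fb n ≤ fb (n + 1) := by simp only [fb]; omega

lemma bound_chain {k m : ℕ} (L : Finset (Fin m)) (n : ℕ) : ∀ (lo : ℕ) (ws : List (Letter k m)),
    (∀ a ∈ ws, a.2 = L ∧ lo ≤ a.1.val ∧ a.1.val < lo + n) →
    ∃ ws', ws'.length ≤ fb n ∧ WEq lle ws ws' := by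
  induction n with
  | zero =>
    intro lo ws h
    refine ⟨[], by simp, ?_⟩
    cases ws with
    | nil => exact WEq.refl _ _
    | cons a ws =>
      have := h a (by simp)
      omega
  | succ n ih =>
    intro lo ws h
    by_cases hlo : ∃ a ∈ ws, a.1.val = lo
    swap
    · obtain ⟨ws', h1, h2⟩ := ih (lo + 1) ws (fun a ha => by
        have h1 := h a ha
        have h2 : a.1.val ≠ lo := fun h' => hlo ⟨a, ha, h'⟩
        exact ⟨h1.1, by omega, by omega⟩)
      exact ⟨ws', h1.trans (fb_mono n), h2⟩
    by_cases hhi : ∃ a ∈ ws, a.1.val = lo + n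
    swap
    · obtain ⟨ws', h1, h2⟩ := ih lo ws (fun a ha => by
        have h1 := h a ha
        have h2 : a.1.val ≠ lo + n := fun h' => hhi ⟨a, ha, h'⟩
        exact ⟨h1.1, by omega, by omega⟩)
      exact ⟨ws', h1.trans (fb_mono n), h2⟩
    let ext : Letter k m → Prop := fun a => a.1.val = lo ∨ a.1.val = lo + n
    obtain ⟨p, e, s, hws, he, hp⟩ := exists_first ext ws (by
      obtain ⟨a, ha, h'⟩ := hlo; exact ⟨a, ha, Or.inl h'⟩)
    have hp' : ∀ a ∈ p, a.2 = L ∧ lo ≤ a.1.val ∧ a.1.val < lo + n := by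
      intro a ha
      have h1 := h a (by rw [hws]; simp [ha])
      have h2 := hp a ha
      simp only [ext, not_or] at h2
      exact ⟨h1.1, by omega, by omega⟩
    obtain ⟨p', hp1, hp2⟩ := ih lo p hp'
    by_cases hs : ∃ a ∈ s, ext a
    swap
    · have hs' : ∀ a ∈ s, a.2 = L ∧ lo ≤ a.1.val ∧ a.1.val < lo + n := by
        intro a ha
        have h1 := h a (by rw [hws]; simp [ha])
        have h2 : ¬ ext a := fun h' => hs ⟨a, ha, h'⟩
        simp only [ext, not_or] at h2
        exact ⟨h1.1, by omega, by omega⟩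
      obtain ⟨s', hs1, hs2⟩ := ih lo s hs'
      refine ⟨p' ++ ([e] ++ s'), by simp [fb]; omega, ?_⟩
      rw [hws]
      exact hp2.append ((WEq.refl _ [e]).append hs2)
    obtain ⟨mid, e', t, hst, he', ht⟩ := exists_last ext s hs
    have ht' : ∀ a ∈ t, a.2 = L ∧ lo ≤ a.1.val ∧ a.1.val < lo + n := by
      intro a ha
      have h1 := h a (by rw [hws, hst]; simp [ha])
      have h2 := ht a ha
      simp only [ext, not_or] at h2
      exact ⟨h1.1, by omega, by omega⟩
    obtain ⟨t', ht1, ht2⟩ := ih lo t ht'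
    suffices hcore : ∃ c', c'.length ≤ 3 ∧ WEq lle (e :: (mid ++ [e'])) c' by
      obtain ⟨c', hc1, hc2⟩ := hcore
      refine ⟨p' ++ (c' ++ t'), by simp [fb]; omega, ?_⟩
      have : ws = p ++ ((e :: (mid ++ [e'])) ++ t) := by rw [hws, hst]; simp
      rw [this]
      exact hp2.append (hc2.append ht2)
    have hmem : ∀ a ∈ e :: (mid ++ [e']), a.2 = L ∧ lo ≤ a.1.val ∧ a.1.val ≤ lo + n := by
      intro a ha
      have h1 := h a (by rw [hws, hst]; simp at ha ⊢; tauto)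
      exact ⟨h1.1, by omega, by omega⟩
    have between : ∀ (x y : Letter k m) (l : List (Letter k m)), x.2 = L → y.2 = L →
        (∀ a ∈ l, a.2 = L ∧ lo ≤ a.1.val ∧ a.1.val ≤ lo + n) →
        (x.1.val = lo ∧ y.1.val = lo + n ∨ x.1.val = lo + n ∧ y.1.val = lo) →
        WEq lle (x :: (l ++ [y])) [x, y] := by
      intro x y l hx hy hl hxy
      apply weq_reduce
      rcases hxy with ⟨h1, h2⟩ | ⟨h1, h2⟩
      · left
        intro z hz
        have := hl z hz
        refine ⟨⟨?_, by rw [hx, this.1]⟩, ⟨?_, by rw [hy, this.1]⟩⟩ <;> rw [Fin.le_def] <;> omega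
      · right
        intro z hz
        have := hl z hz
        refine ⟨⟨?_, by rw [hy, this.1]⟩, ⟨?_, by rw [hx, this.1]⟩⟩ <;> rw [Fin.le_def] <;> omega
    have heL := hmem e (by simp)
    have heL' := hmem e' (by simp)
    by_cases hne : e.1.val = lo ∧ e'.1.val = lo + n ∨ e.1.val = lo + n ∧ e'.1.val = lo
    · exact ⟨[e, e'], by simp, between e e' mid heL.1 heL'.1
        (fun a ha => hmem a (by simp [ha])) hne⟩
    · -- both ends are the same extreme; the other one is in the middle
      obtain ⟨o, ho, hov⟩ : ∃ o ∈ mid, (e.1.val = lo ∧ o.1.val = lo + n) ∨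
          (e.1.val = lo + n ∧ o.1.val = lo) := by
        have aux : ∀ o ∈ ws, ext o → o.1.val ≠ e.1.val → o.1.val ≠ e'.1.val → o ∈ mid := by
          intro o ho hoe h1 h2
          rw [hws, hst] at ho
          simp only [List.mem_append, List.mem_cons] at ho
          rcases ho with ho | rfl | ho | rfl | ho
          · exact absurd hoe (hp o ho)
          · exact absurd rfl h1
          · exact ho
          · exact absurd rfl h2
          · exact absurd hoe (ht o ho)
        simp only [ext] at he he'
        obtain ⟨a, ha, hav⟩ := hlo
        obtain ⟨b, hb, hbv⟩ := hhi
        rcases he with he | he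
        · exact ⟨b, aux b hb (Or.inr hbv) (by omega) (by omega), Or.inl ⟨he, hbv⟩⟩
        · exact ⟨a, aux a ha (Or.inl hav) (by omega) (by omega), Or.inr ⟨he, hav⟩⟩
      obtain ⟨m1, m2, rfl⟩ := List.append_of_mem ho
      have hoL := hmem o (by simp)
      refine ⟨[e, o, e'], by simp, ?_⟩
      have r1 := between e o m1 heL.1 hoL.1 (fun a ha => hmem a (by simp [ha])) (by omega)
      have r2 := between o e' m2 hoL.1 heL'.1 (fun a ha => hmem a (by simp [ha])) (by
        simp only [ext] at he he'; omega)
      have r3 : WEq lle ((e :: (m1 ++ [o])) ++ (m2 ++ [e'])) ([e, o] ++ (m2 ++ [e'])) :=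
        r1.append (WEq.refl _ _)
      have r4 : WEq lle ([e] ++ (o :: (m2 ++ [e']))) ([e] ++ [o, e']) :=
        (WEq.refl _ [e]).append r2
      have := r3.trans r4
      simpa using this

lemma bound_phase {k m : ℕ} (j : ℕ) : ∀ (ws : List (Letter k m)),
    ws.Pairwise (fun a b => a.2 ⊆ b.2) → (∀ a ∈ ws, m < a.2.card + j) →
    ∃ ws', ws'.length ≤ j * fb (k + 2) ∧ WEq lle ws ws' := by
  induction j with
  | zero =>
    intro ws _ h
    refine ⟨[], by simp, ?_⟩
    cases ws with
    | nil => exact WEq.refl _ _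
    | cons a ws =>
      have h1 := h a (by simp)
      have h2 := Finset.card_le_univ a.2
      simp at h2
      omega
  | succ j ih =>
    intro ws hpw h
    -- split at the first letter with a large label set
    obtain ⟨p, s, rfl, hp, hs⟩ : ∃ p s, ws = p ++ s ∧ (∀ a ∈ p, ¬ m < a.2.card + j) ∧
        (∀ a ∈ s, m < a.2.card + j) := by
      by_cases hex : ∃ a ∈ ws, m < a.2.card + j
      · obtain ⟨p, a, s, rfl, ha, hp⟩ := exists_first _ ws hex
        refine ⟨p, a :: s, rfl, hp, ?_⟩
        intro b hb
        rcases List.mem_cons.1 hb with rfl | hb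
        · exact ha
        · have := (List.pairwise_cons.1 (List.pairwise_append.1 hpw).2.1).1 b hb
          have := Finset.card_le_card this
          omega
      · exact ⟨ws, [], by simp, fun a ha h' => hex ⟨a, ha, h'⟩, by simp⟩
    obtain ⟨s', hs1, hs2⟩ := ih s (List.pairwise_append.1 hpw).2.1 hs
    have hpp := (List.pairwise_append.1 hpw).1
    obtain ⟨p', hp1, hp2⟩ : ∃ p', p'.length ≤ fb (k + 2) ∧ WEq lle p p' := by
      cases p with
      | nil => exact ⟨[], by simp, WEq.refl _ _⟩
      | cons a p =>
        apply bound_chain a.2 (k + 2) 0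
        intro b hb
        refine ⟨?_, Nat.zero_le _, by have := b.1.isLt; omega⟩
        rcases List.mem_cons.1 hb with rfl | hb'
        · rfl
        · have h1 := (List.pairwise_cons.1 hpp).1 b hb'
          have h2 := hp b hb
          have h3 := h a (by simp)
          have h4 := h b (by simp [hb'])
          have h5 := hp a (by simp)
          exact (Finset.eq_of_subset_of_card_le h1 (by omega)).symm
    refine ⟨p' ++ s', ?_, hp2.append hs2⟩
    simp only [List.length_append]
    rw [Nat.succ_mul]
    omega

end Multigraph

namespace Multigraph
open Classical in
/-- The letter of a vertex set of a boundaried graph. -/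
noncomputable def letter (k : ℕ) {m : ℕ} (A : Multigraph) (F : Set A.E) (x : Fin m → A.V)
    (S : Set A.V) : Letter k m :=
  (⟨min (A.cut F S) (k + 1), by omega⟩, Finset.univ.filter (fun p => x p ∈ S))

/-- The word of an ordering of a boundaried graph. -/
noncomputable def prof (k : ℕ) {m : ℕ} (A : Multigraph) (F : Set A.E) (x : Fin m → A.V) :
    Set A.V → List A.V → List (Letter k m)
  | S, [] => [letter k A F x S]
  | S, v :: l => letter k A F x S :: prof k A F x (insert v S) l

/-- The constraint imposed by the other side. -/
def bletter (k : ℕ) {m : ℕ} (B : Multigraph) (F : Set B.E) (y : Fin m → B.V) (R : Set (Fin m))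
    (S : Set B.V) : Letter k m → Prop := fun a =>
  a.1.val + B.cut F S + {p : Fin m | p ∉ R ∧ ¬ (p ∈ a.2 ↔ y p ∈ S)}.ncard ≤ k

/-- The constraint word of the other side. -/
def bprof (k : ℕ) {m : ℕ} (B : Multigraph) (F : Set B.E) (y : Fin m → B.V) (R : Set (Fin m)) :
    Set B.V → List B.V → List (Letter k m → Prop)
  | S, [] => [bletter k B F y R S]
  | S, v :: l => bletter k B F y R S :: bprof k B F y R (insert v S) l

lemma bprof_dc (k : ℕ) {m : ℕ} (B : Multigraph) (F : Set B.E) (y : Fin m → B.V)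
    (R : Set (Fin m)) (S : Set B.V) (l : List B.V) : ∀ b ∈ bprof k B F y R S l, DC lle b := by
  have h0 : ∀ S, DC lle (bletter k B F y R S) := by
    intro S u v huv hv
    unfold bletter at hv ⊢
    rw [huv.2]
    have := huv.1
    rw [Fin.le_def] at this
    omega
  induction l generalizing S with
  | nil => intro b hb; simp only [bprof, List.mem_singleton] at hb; rw [hb]; exact h0 S
  | cons v l ih =>
    intro b hb
    rcases List.mem_cons.1 hb with rfl | hb
    · exact h0 S
    · exact ih _ b hb

lemma prof_labels (k : ℕ) {m : ℕ} (A : Multigraph) (F : Set A.E) (x : Fin m → A.V)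
    (S : Set A.V) (l : List A.V) : (∀ a ∈ prof k A F x S l, (letter k A F x S).2 ⊆ a.2) ∧
      (prof k A F x S l).Pairwise (fun a b => a.2 ⊆ b.2) := by
  induction l generalizing S with
  | nil => simp [prof]
  | cons v l ih =>
    obtain ⟨h1, h2⟩ := ih (insert v S)
    have h3 : ∀ a ∈ prof k A F x (insert v S) l, (letter k A F x S).2 ⊆ a.2 := by
      intro a ha
      refine subset_trans ?_ (h1 a ha)
      intro p hp
      simp only [letter, Finset.mem_filter, Finset.mem_univ, true_and] at hp ⊢
      exact Set.mem_insert_of_mem _ hp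
    constructor
    · intro a ha
      rcases List.mem_cons.1 ha with rfl | ha
      · exact subset_rfl
      · exact h3 a ha
    · exact List.pairwise_cons.2 ⟨h3, h2⟩

lemma prof_bound (k : ℕ) {m : ℕ} (A : Multigraph) (F : Set A.E) (x : Fin m → A.V)
    (S : Set A.V) (l : List A.V) : ∃ ws : List (Letter k m),
      ws.length ≤ (m + 1) * fb (k + 2) ∧ WEq lle (prof k A F x S l) ws :=
  bound_phase (m + 1) _ (prof_labels k A F x S l).2 (fun a _ => by omega)

section Join
variable {m : ℕ} (A B : Multigraph) (x : Fin m → A.V) (y : Fin m → B.V)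

lemma cut_join (F : Set (join A B x y).E) (S : Set (A.V ⊕ B.V)) :
    (join A B x y).cut F S =
      A.cut {e | Sum.inl (Sum.inl e) ∈ F} (Sum.inl ⁻¹' S) +
      B.cut {e | Sum.inl (Sum.inr e) ∈ F} (Sum.inr ⁻¹' S) +
      {p : Fin m | p ∉ {p | Sum.inr p ∈ F} ∧
        ¬ (x p ∈ Sum.inl ⁻¹' S ↔ y p ∈ Sum.inr ⁻¹' S)}.ncard := by
  refine (ncard_sum (α := A.E ⊕ B.E) (β := Fin m) _).trans ?_
  refine congrArg₂ (· + ·) ?_ rfl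
  exact (ncard_sum (α := A.E) (β := B.E) _).trans rfl

lemma compat_iff (k : ℕ) (F : Set (join A B x y).E) (S : Set (A.V ⊕ B.V)) :
    (join A B x y).cut F S ≤ k ↔
    bletter k B {e | Sum.inl (Sum.inr e) ∈ F} y {p | Sum.inr p ∈ F} (Sum.inr ⁻¹' S)
      (letter k A {e | Sum.inl (Sum.inl e) ∈ F} x (Sum.inl ⁻¹' S)) := by
  rw [cut_join]
  simp only [bletter, letter, Finset.mem_filter, Finset.mem_univ, true_and]
  omega

lemma merge_of_ok (k : ℕ) (F : Set (join A B x y).E) (l : List (A.V ⊕ B.V)) :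
    ∀ S : Set (A.V ⊕ B.V), OK (join A B x y) F k S l →
    Merge (prof k A {e | Sum.inl (Sum.inl e) ∈ F} x (Sum.inl ⁻¹' S) (l.filterMap Sum.getLeft?))
      (bprof k B {e | Sum.inl (Sum.inr e) ∈ F} y {p | Sum.inr p ∈ F} (Sum.inr ⁻¹' S)
        (l.filterMap Sum.getRight?)) := by
  induction l with
  | nil =>
    intro S h
    exact .single ((compat_iff A B x y k F S).1 h)
  | cons v l ih =>
    intro S h
    have h1 := (compat_iff A B x y k F S).1 h.1
    rcases v with v | v
    · have h2 := ih (insert (Sum.inl v) S : Set (A.V ⊕ B.V)) h.2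
      have e1 : (Sum.inl ⁻¹' (insert (Sum.inl v) S) : Set A.V) = insert v (Sum.inl ⁻¹' S) := by
        ext; simp
      have e2 : (Sum.inr ⁻¹' (insert (Sum.inl v) S) : Set B.V) = Sum.inr ⁻¹' S := by
        ext; simp
      rw [e1, e2] at h2
      simp only [List.filterMap_cons, Sum.getLeft?_inl, Sum.getRight?_inl, prof]
      cases hr : l.filterMap Sum.getRight? with
      | nil => rw [hr] at h2; exact h2.cons_left h1
      | cons c t => rw [hr] at h2; exact h2.cons_left h1
    · have h2 := ih (insert (Sum.inr v) S : Set (A.V ⊕ B.V)) h.2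
      have e1 : (Sum.inr ⁻¹' (insert (Sum.inr v) S) : Set B.V) = insert v (Sum.inr ⁻¹' S) := by
        ext; simp
      have e2 : (Sum.inl ⁻¹' (insert (Sum.inr v) S) : Set A.V) = Sum.inl ⁻¹' S := by
        ext; simp
      rw [e1, e2] at h2
      simp only [List.filterMap_cons, Sum.getLeft?_inr, Sum.getRight?_inr, bprof]
      cases hr : l.filterMap Sum.getLeft? with
      | nil => rw [hr] at h2; exact h2.cons_right _ h1
      | cons c t => rw [hr] at h2; exact h2.cons_right _ h1

lemma prof_ne_nil (k : ℕ) (F : Set A.E) (S : Set A.V) (l : List A.V) :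
    prof k A F x S l ≠ [] := by cases l <;> simp [prof]

lemma bprof_ne_nil (k : ℕ) (F : Set B.E) (R : Set (Fin m)) (S : Set B.V) (l : List B.V) :
    bprof k B F y R S l ≠ [] := by cases l <;> simp [bprof]

lemma ok_of_merge (k : ℕ) (F : Set (join A B x y).E) (as : List (Letter k m))
    (bs : List (Letter k m → Prop)) (h : Merge as bs) : ∀ (S : Set (A.V ⊕ B.V)) lA lB,
    as = prof k A {e | Sum.inl (Sum.inl e) ∈ F} x (Sum.inl ⁻¹' S) lA →
    bs = bprof k B {e | Sum.inl (Sum.inr e) ∈ F} y {p | Sum.inr p ∈ F} (Sum.inr ⁻¹' S) lB →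
    ∃ l : List (A.V ⊕ B.V), OK (join A B x y) F k S l ∧ (∀ v ∈ lA, Sum.inl v ∈ l) ∧
      (∀ v ∈ lB, Sum.inr v ∈ l) := by
  induction h with
  | @single a b h =>
    intro S lA lB ha hb
    cases lA with
    | cons v l => simp [prof, (prof_ne_nil A x k _ _ _).symm] at ha
    | nil =>
    cases lB with
    | cons v l => simp [bprof, (bprof_ne_nil B y k _ _ _ _).symm] at hb
    | nil =>
    simp only [prof, bprof, List.cons.injEq, and_true] at ha hb
    subst ha hb
    exact ⟨[], (compat_iff A B x y k F S).2 h, by simp, by simp⟩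
  | @left a a' as b bs h hm ih =>
    intro S lA lB ha hb
    have hbh : b = bletter k B {e | Sum.inl (Sum.inr e) ∈ F} y {p | Sum.inr p ∈ F}
        (Sum.inr ⁻¹' S) := by
      cases lB <;> (simp only [bprof, List.cons.injEq] at hb; exact hb.1)
    cases lA with
    | nil => simp [prof] at ha
    | cons v lA =>
      simp only [prof, List.cons.injEq] at ha
      obtain ⟨rfl, ha⟩ := ha
      have e1 : (Sum.inl ⁻¹' (insert (Sum.inl v) S) : Set A.V) = insert v (Sum.inl ⁻¹' S) := by
        ext; simp
      have e2 : (Sum.inr ⁻¹' (insert (Sum.inl v) S) : Set B.V) = Sum.inr ⁻¹' S := by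
        ext; simp
      obtain ⟨l, hl, h1, h2⟩ := ih (insert (Sum.inl v) S) lA lB (by rw [e1]; exact ha)
        (by rw [e2]; exact hb)
      refine ⟨Sum.inl v :: l, ⟨(compat_iff A B x y k F S).2 (by rw [← hbh]; exact h), hl⟩, ?_, ?_⟩
      · intro u hu
        rcases List.mem_cons.1 hu with rfl | hu
        · simp
        · exact List.mem_cons_of_mem _ (h1 u hu)
      · intro u hu
        exact List.mem_cons_of_mem _ (h2 u hu)
  | @right a as b b' bs h hm ih =>
    intro S lA lB ha hb
    have hah : a = letter k A {e | Sum.inl (Sum.inl e) ∈ F} x (Sum.inl ⁻¹' S) := by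
      cases lA <;> (simp only [prof, List.cons.injEq] at ha; exact ha.1)
    cases lB with
    | nil => simp [bprof] at hb
    | cons v lB =>
      simp only [bprof, List.cons.injEq] at hb
      obtain ⟨rfl, hb⟩ := hb
      have e1 : (Sum.inr ⁻¹' (insert (Sum.inr v) S) : Set B.V) = insert v (Sum.inr ⁻¹' S) := by
        ext; simp
      have e2 : (Sum.inl ⁻¹' (insert (Sum.inr v) S) : Set A.V) = Sum.inl ⁻¹' S := by
        ext; simp
      obtain ⟨l, hl, h1, h2⟩ := ih (insert (Sum.inr v) S) lA lB (by rw [e2]; exact ha)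
        (by rw [e1]; exact hb)
      refine ⟨Sum.inr v :: l, ⟨(compat_iff A B x y k F S).2 (by rw [← hah]; exact h), hl⟩, ?_, ?_⟩
      · intro u hu
        exact List.mem_cons_of_mem _ (h1 u hu)
      · intro u hu
        rcases List.mem_cons.1 hu with rfl | hu
        · simp
        · exact List.mem_cons_of_mem _ (h2 u hu)

end Join

/-- Possible entries of a type. -/
abbrev Entry (k m : ℕ) : Type :=
  Fin (m + 1) × {ws : List (Letter k m) // ws.length ≤ (m + 1) * fb (k + 2)}

instance (k m : ℕ) : Finite (Entry k m) := by
  have : Finite {ws : List (Letter k m) // ws.length ≤ (m + 1) * fb (k + 2)} :=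
    (List.finite_length_le (Letter k m) ((m + 1) * fb (k + 2))).to_subtype
  infer_instance

/-- The type of a boundaried graph. -/
def tp (k : ℕ) {m : ℕ} (A : Multigraph) (x : Fin m → A.V) : Set (Entry k m) :=
  {t | ∃ F : Set A.E, F.ncard = t.1.val ∧ ∃ l : List A.V, (∀ v, v ∈ l) ∧
    WEq lle (prof k A F x ∅ l) t.2.1}

/-- A layout of `join` built from its three edge parts. -/
def joinSet {m : ℕ} {A B : Multigraph} (x : Fin m → A.V) (y : Fin m → B.V)
    (FA : Set A.E) (FB : Set B.E) (R : Set (Fin m)) : Set (join A B x y).E :=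
  {e : (A.E ⊕ B.E) ⊕ Fin m | Sum.elim (Sum.elim (· ∈ FA) (· ∈ FB)) (· ∈ R) e}

lemma ncard_joinSet {m : ℕ} {A B : Multigraph} (x : Fin m → A.V) (y : Fin m → B.V)
    (F : Set (join A B x y).E) :
    F.ncard = {e | Sum.inl (Sum.inl e) ∈ F}.ncard + {e | Sum.inl (Sum.inr e) ∈ F}.ncard +
      {p : Fin m | Sum.inr p ∈ F}.ncard := by
  refine (ncard_sum (α := A.E ⊕ B.E) (β := Fin m) _).trans ?_
  refine congrArg₂ (· + ·) ?_ rfl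
  exact (ncard_sum (α := A.E) (β := B.E) _).trans rfl

/-- Exchanging a boundaried graph by another one of the same type. -/
lemma exchange (k : ℕ) {m : ℕ} (A A' B : Multigraph) (x : Fin m → A.V) (x' : Fin m → A'.V)
    (y : Fin m → B.V) (htp : tp k A' x' = tp k A x) (hA : Lay A ∅ k) (w : ℕ)
    (h : ∃ F : Set (join A' B x' y).E, F.ncard ≤ w ∧ Lay (join A' B x' y) F k) :
    ∃ F : Set (join A B x y).E, F.ncard ≤ w ∧ Lay (join A B x y) F k := by
  obtain ⟨F', hF', l', hl', hok'⟩ := h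
  have hm := merge_of_ok A' B x' y k F' l' ∅ hok'
  rw [ncard_joinSet] at hF'
  set FA' : Set A'.E := {e | Sum.inl (Sum.inl e) ∈ F'} with hFA'
  set FB : Set B.E := {e | Sum.inl (Sum.inr e) ∈ F'} with hFB
  set R : Set (Fin m) := {p : Fin m | Sum.inr p ∈ F'} with hR
  simp only [Set.preimage_empty] at hm
  have hBall : ∀ v, v ∈ l'.filterMap Sum.getRight? := fun v =>
    List.mem_filterMap.2 ⟨Sum.inr v, hl' _, rfl⟩
  by_cases hbig : FA'.ncard ≤ m
  · obtain ⟨ws, hws, heq⟩ := prof_bound k A' FA' x' ∅ (l'.filterMap Sum.getLeft?)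
    have hmem : ((⟨FA'.ncard, by omega⟩, ⟨ws, hws⟩) : Entry k m) ∈ tp k A' x' :=
      ⟨FA', rfl, _, fun v => List.mem_filterMap.2 ⟨Sum.inl v, hl' _, rfl⟩, heq⟩
    rw [htp] at hmem
    obtain ⟨FA, hFA, lA, hlA, heqA⟩ := hmem
    have hdc := bprof_dc k B FB y R ∅ (l'.filterMap Sum.getRight?)
    have hm2 := heqA.symm.merge hdc (heq.merge hdc hm)
    refine ⟨joinSet x y FA FB R, ?_, ?_⟩
    · rw [ncard_joinSet]
      refine le_trans (le_of_eq ?_) hF'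
      simp only at hFA
      rw [← hFA]
      rfl
    · obtain ⟨l, hl, h1, h2⟩ := ok_of_merge A B x y k (joinSet x y FA FB R) _ _ hm2 ∅ lA
        (l'.filterMap Sum.getRight?) rfl rfl
      refine ⟨l, ?_, hl⟩
      rintro (v | v)
      · exact h1 v (hlA v)
      · exact h2 v (hBall v)
  · -- delete the whole boundary instead
    obtain ⟨lA, hlA, hokA⟩ := hA
    have hbB : ∀ b ∈ bprof k B FB y R ∅ (l'.filterMap Sum.getRight?), ∃ a, b a :=
      fun b hb => by
        obtain ⟨a, _, hba⟩ := hm.exists_left b hb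
        exact ⟨a, hba⟩
    have hcutB : ∀ (l : List B.V) (S : Set B.V), (∀ b ∈ bprof k B FB y R S l, ∃ a, b a) →
        OK B FB k S l := by
      intro l
      induction l with
      | nil =>
        intro S h
        obtain ⟨a, ha⟩ := h _ (List.mem_singleton.2 rfl)
        unfold bletter at ha
        show B.cut FB S ≤ k
        omega
      | cons v l ih =>
        intro S h
        obtain ⟨a, ha⟩ := h _ List.mem_cons_self
        unfold bletter at ha
        exact ⟨by omega, ih _ (fun b hb => h b (List.mem_cons_of_mem _ hb))⟩
    have hokB := hcutB _ _ hbB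
    refine ⟨joinSet x y ∅ FB Set.univ, ?_, ?_⟩
    · rw [ncard_joinSet]
      have e1 : {e : A.E | Sum.inl (Sum.inl e) ∈ joinSet x y ∅ FB Set.univ} = ∅ := rfl
      have e2 : {e : B.E | Sum.inl (Sum.inr e) ∈ joinSet x y (∅ : Set A.E) FB Set.univ} = FB := rfl
      have e3 : {p : Fin m | Sum.inr p ∈ joinSet x y (∅ : Set A.E) FB Set.univ} = Set.univ := rfl
      rw [e1, e2, e3]
      simp only [Set.ncard_empty, Set.ncard_univ, Nat.card_eq_fintype_card, Fintype.card_fin]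
      omega
    · have hc : ∀ S : Set (A.V ⊕ B.V), (join A B x y).cut (joinSet x y ∅ FB Set.univ) S =
          A.cut ∅ (Sum.inl ⁻¹' S) + B.cut FB (Sum.inr ⁻¹' S) := by
        intro S
        rw [cut_join]
        have e3 : {p : Fin m | Sum.inr p ∈ joinSet x y (∅ : Set A.E) FB Set.univ} = Set.univ := rfl
        rw [e3]
        simp only [Set.mem_univ, not_true_eq_false, false_and, Set.ofPred_false, Set.ncard_empty,
          add_zero]
        rfl
      have kB : ∀ (l : List B.V) (S : Set (A.V ⊕ B.V)), Sum.inl ⁻¹' S = Set.univ →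
          OK B FB k (Sum.inr ⁻¹' S) l →
          OK (join A B x y) (joinSet x y ∅ FB Set.univ) k S (l.map Sum.inr) := by
        intro l
        induction l with
        | nil =>
          intro S hS h
          show _ ≤ k
          rw [hc, hS, cut_univ]
          have := h.head
          omega
        | cons v l ih =>
          intro S hS h
          refine ⟨?_, ih (insert (Sum.inr v) S : Set (A.V ⊕ B.V)) ?_ ?_⟩
          · rw [hc, hS, cut_univ]
            have := h.head
            omega
          · rw [← hS]; ext; simp
          · convert h.2 using 1
            ext; simp
      have kA : ∀ (l : List A.V) (S : Set (A.V ⊕ B.V)), Sum.inr ⁻¹' S = (∅ : Set B.V) →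
          (∀ v, v ∈ l ∨ Sum.inl v ∈ S) → OK A ∅ k (Sum.inl ⁻¹' S) l →
          OK (join A B x y) (joinSet x y ∅ FB Set.univ) k S
            (l.map Sum.inl ++ (l'.filterMap Sum.getRight?).map Sum.inr) := by
        intro l
        induction l with
        | nil =>
          intro S hS hall h
          apply kB
          · ext v; simpa using hall v
          · rw [hS]; exact hokB
        | cons v l ih =>
          intro S hS hall h
          refine ⟨?_, ih (insert (Sum.inl v) S : Set (A.V ⊕ B.V)) ?_ ?_ ?_⟩
          · rw [hc, hS, cut_empty]
            have := h.head
            omega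
          · rw [← hS]; ext; simp
          · intro u
            have := hall u
            simp at this ⊢
            tauto
          · convert h.2 using 1
            ext; simp
      refine ⟨_, ?_, kA lA ∅ rfl (fun v => Or.inl (hlA v)) hokA⟩
      rintro (v | v)
      · exact List.mem_append_left _ (List.mem_map_of_mem (hlA v))
      · exact List.mem_append_right _ (List.mem_map_of_mem (hBall v))

end Multigraph

namespace Multigraph

/-- The edge type of a multigraph is a fintype. -/
noncomputable instance fintypeE (G : Multigraph) : Fintype G.E := Fintype.ofFinite _

/-- The vertex type of a multigraph is a fintype. -/
noncomputable instance fintypeV (G : Multigraph) : Fintype G.V := Fintype.ofFinite _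

/-- All darts of the walk satisfy `r`. -/
def Walk.Good {G : Multigraph} (r : G.E → G.V → Prop) : ∀ {u v : G.V}, G.Walk u v → Prop
  | _, _, .nil _ => True
  | u, _, .cons e _ p => r e u ∧ p.Good r

lemma Walk.start_mem {G : Multigraph} {u v : G.V} (p : G.Walk u v) : u ∈ p.support := by
  cases p <;> simp [Walk.support]

lemma Walk.end_mem {G : Multigraph} {u v : G.V} (p : G.Walk u v) : v ∈ p.support := by
  induction p <;> simp_all [Walk.support]

lemma Walk.exists_suffix {G : Multigraph} {u v : G.V} (p : G.Walk u v) (x : G.V)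
    (hx : x ∈ p.support) : ∃ q : G.Walk x v, q.support <:+ p.support ∧ q.edges <:+ p.edges ∧
      ∀ r, p.Good r → q.Good r := by
  induction p with
  | nil w =>
    simp only [Walk.support, List.mem_singleton] at hx
    subst hx
    exact ⟨.nil x, List.suffix_rfl, List.suffix_rfl, fun _ h => h⟩
  | @cons u v w e h p ih =>
    by_cases hxu : x = u
    · subst hxu
      exact ⟨.cons e h p, List.suffix_rfl, List.suffix_rfl, fun _ h => h⟩
    · have hx' : x ∈ p.support := by
        simp only [Walk.support, List.mem_cons] at hx
        tauto
      obtain ⟨q, h1, h2, h3⟩ := ih hx'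
      exact ⟨q, h1.trans (List.suffix_cons _ _), h2.trans (List.suffix_cons _ _),
        fun r hr => h3 r hr.2⟩

lemma Walk.exists_path {G : Multigraph} {u v : G.V} (p : G.Walk u v) :
    ∃ q : G.Walk u v, q.support.Nodup ∧ q.support ⊆ p.support ∧ q.edges ⊆ p.edges ∧
      ∀ r, p.Good r → q.Good r := by
  induction p with
  | nil w => exact ⟨.nil w, by simp [Walk.support], fun _ h => h, fun _ h => h, fun _ h => h⟩
  | @cons u v w e h p ih =>
    obtain ⟨q, h1, h2, h3, h4⟩ := ih
    by_cases hu : u ∈ q.support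
    · obtain ⟨q', g1, g2, g3⟩ := q.exists_suffix u hu
      exact ⟨q', h1.sublist g1.sublist, fun z hz => List.mem_cons_of_mem _ (h2 (g1.subset hz)),
        fun z hz => List.mem_cons_of_mem _ (h3 (g2.subset hz)), fun r hr => g3 r (h4 r hr.2)⟩
    · refine ⟨.cons e h q, List.nodup_cons.2 ⟨hu, h1⟩, ?_, ?_, fun r hr => ⟨hr.1, h4 r hr.2⟩⟩
      · exact List.cons_subset_cons _ h2
      · exact List.cons_subset_cons _ h3

lemma Walk.ends_mem {G : Multigraph} {u v : G.V} (p : G.Walk u v) (e : G.E) (he : e ∈ p.edges) :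
    (G.ends e).1 ∈ p.support ∧ (G.ends e).2 ∈ p.support := by
  induction p with
  | nil w => simp [Walk.edges] at he
  | @cons u v w e' h p ih =>
    simp only [Walk.edges, List.mem_cons] at he
    simp only [Walk.support, List.mem_cons]
    rcases he with rfl | he
    · have := p.start_mem
      rcases h with h | h <;> rw [h] <;> simp [this]
    · have := ih he
      tauto

lemma Walk.edges_nodup {G : Multigraph} {u v : G.V} (p : G.Walk u v) (hp : p.support.Nodup) :
    p.edges.Nodup := by
  induction p with
  | nil w => simp [Walk.edges]
  | @cons u v w e h p ih =>
    simp only [Walk.support, List.nodup_cons] at hp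
    refine List.nodup_cons.2 ⟨fun he => hp.1 ?_, ih hp.2⟩
    have := p.ends_mem e he
    rcases h with h | h <;> rw [h] at this
    · exact this.1
    · exact this.2

open Classical in
/-- Integer indicator. -/
noncomputable def ind {α : Type} (X : Set α) (v : α) : ℤ := if v ∈ X then 1 else 0

open Classical in
/-- Sign of a dart. -/
noncomputable def sgn (G : Multigraph) (e : G.E) (u : G.V) : ℤ :=
  if (G.ends e).1 = u then 1 else -1

/-- Net flow out of `X`. -/
noncomputable def net (G : Multigraph) (f : G.E → ℤ) (X : Set G.V) : ℤ :=
  ∑ e, f e * (ind X (G.ends e).1 - ind X (G.ends e).2)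

lemma net_add (G : Multigraph) (f g : G.E → ℤ) (X : Set G.V) :
    G.net (fun e => f e + g e) X = G.net f X + G.net g X := by
  simp [net, add_mul, Finset.sum_add_distrib]

lemma net_neg (G : Multigraph) (f : G.E → ℤ) (X : Set G.V) :
    G.net (fun e => - f e) X = - G.net f X := by
  simp [net]

lemma ind_sum {α : Type} [Fintype α] (X : Set α) (v : α) :
    ind X v = ∑ x, ind X x * ind {x} v := by
  classical
  simp [ind]

lemma net_sum (G : Multigraph) (f : G.E → ℤ) (X : Set G.V) :
    G.net f X = ∑ v, ind X v * G.net f {v} := by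
  unfold net
  simp_rw [Finset.mul_sum]
  rw [Finset.sum_comm]
  refine Finset.sum_congr rfl fun e _ => ?_
  rw [ind_sum X (G.ends e).1, ind_sum X (G.ends e).2, ← Finset.sum_sub_distrib, Finset.mul_sum]
  refine Finset.sum_congr rfl fun v _ => ?_
  ring

lemma net_conserve (G : Multigraph) (f : G.E → ℤ) (A X : Set G.V) (hAX : A ⊆ X)
    (h : ∀ v ∈ X, v ∉ A → G.net f {v} = 0) : G.net f X = G.net f A := by
  rw [net_sum G f X, net_sum G f A]
  refine Finset.sum_congr rfl fun v _ => ?_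
  by_cases hv : v ∈ X
  · by_cases hA : v ∈ A
    · simp [ind, hv, hA]
    · simp [h v hv hA]
  · have : v ∉ A := fun h => hv (hAX h)
    simp [ind, hv, this]

open Classical in
/-- The unit flow along a walk. -/
noncomputable def Walk.chi {G : Multigraph} : ∀ {u v : G.V}, G.Walk u v → G.E → ℤ
  | _, _, .nil _ => fun _ => 0
  | u, _, .cons e _ p => fun e' => (if e' = e then G.sgn e u else 0) + p.chi e'

lemma net_chi (G : Multigraph) {u v : G.V} (p : G.Walk u v) (X : Set G.V) :
    G.net p.chi X = ind X u - ind X v := by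
  classical
  induction p with
  | nil w => simp [net, Walk.chi]
  | @cons u v w e h p ih =>
    simp only [Walk.chi]
    rw [net_add, ih]
    have : G.net (fun e' => if e' = e then G.sgn e u else 0) X = ind X u - ind X v := by
      simp only [net, ite_mul, zero_mul, Finset.sum_ite_eq', Finset.mem_univ, if_true]
      have hl := G.loopless e
      rcases h with h | h
      · rw [h] at hl ⊢; simp [sgn, h]
      · rw [h] at hl ⊢
        simp only [sgn, h]
        rw [if_neg hl]; ring
    rw [this]; ring

lemma Walk.chi_not_mem {G : Multigraph} {u v : G.V} (p : G.Walk u v) (e : G.E)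
    (he : e ∉ p.edges) : p.chi e = 0 := by
  induction p with
  | nil w => rfl
  | @cons u v w e' h p ih =>
    simp only [Walk.edges, List.mem_cons, not_or] at he
    simp [Walk.chi, he.1, ih he.2]

lemma Walk.chi_mem {G : Multigraph} {u v : G.V} (p : G.Walk u v) (r : G.E → G.V → Prop)
    (hp : p.support.Nodup) (hr : p.Good r) (e : G.E)
    (he : e ∈ p.edges) : ∃ x, r e x ∧ p.chi e = G.sgn e x := by
  have hn := p.edges_nodup hp
  clear hp
  induction p with
  | nil w => simp [Walk.edges] at he
  | @cons u v w e' h p ih =>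
    simp only [Walk.edges, List.nodup_cons] at hn
    simp only [Walk.edges, List.mem_cons] at he
    by_cases hee : e = e'
    · subst hee
      exact ⟨u, hr.1, by simp [Walk.chi, p.chi_not_mem e hn.1]⟩
    · obtain ⟨x, h1, h2⟩ := ih hr.2 (by tauto) hn.2
      exact ⟨x, h1, by simp [Walk.chi, hee, h2]⟩

/-- Either a good path or a blocking set. -/
lemma path_or_block (G : Multigraph) (r : G.E → G.V → Prop) (A B : Set G.V) :
    (∃ a ∈ A, ∃ b ∈ B, ∃ p : G.Walk a b, p.support.Nodup ∧ p.Good r) ∨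
    ∃ X : Set G.V, A ⊆ X ∧ (∀ b ∈ B, b ∉ X) ∧ ∀ e u v,
      (G.ends e = (u, v) ∨ G.ends e = (v, u)) → u ∈ X → v ∉ X → ¬ r e u := by
  by_cases h : ∃ a ∈ A, ∃ b ∈ B, ∃ p : G.Walk a b, p.Good r
  · left
    obtain ⟨a, ha, b, hb, p, hp⟩ := h
    obtain ⟨q, h1, _, _, h4⟩ := p.exists_path
    exact ⟨a, ha, b, hb, q, h1, h4 r hp⟩
  · right
    refine ⟨{v | ¬ ∃ b ∈ B, ∃ p : G.Walk v b, p.Good r}, ?_, ?_, ?_⟩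
    · rintro a ha ⟨b, hb, p, hp⟩
      exact h ⟨a, ha, b, hb, p, hp⟩
    · intro b hb hX
      exact hX ⟨b, hb, .nil b, trivial⟩
    · intro e u v he hu hv hr
      simp only [Set.mem_ofPred_eq, not_not] at hv
      obtain ⟨b, hb, p, hp⟩ := hv
      exact hu ⟨b, hb, .cons e he p, hr, hp⟩

lemma sgn_cases (G : Multigraph) (e : G.E) (u : G.V) : G.sgn e u = 1 ∨ G.sgn e u = -1 := by
  unfold sgn; split_ifs <;> simp

lemma delta_sum (G : Multigraph) (X : Set G.V) :
    (G.delta X : ℤ) = ∑ e, (ind X (G.ends e).1 - ind X (G.ends e).2) ^ 2 := by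
  classical
  unfold delta
  rw [Set.ncard_eq_toFinset_card', Finset.card_eq_sum_ones, Nat.cast_sum]
  simp only [Set.toFinset_ofPred, Finset.sum_filter]
  refine Finset.sum_congr rfl fun e _ => ?_
  by_cases h1 : (G.ends e).1 ∈ X <;> by_cases h2 : (G.ends e).2 ∈ X <;> simp [ind, h1, h2]

/-- Existence of integral flows. -/
lemma exists_flow (G : Multigraph) (A B : Set G.V) (hAB : ∀ a ∈ A, a ∉ B) (m : ℕ)
    (hm : ∀ X : Set G.V, A ⊆ X → (∀ b ∈ B, b ∉ X) → m ≤ G.delta X) :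
    ∃ f : G.E → ℤ, (∀ e, -1 ≤ f e ∧ f e ≤ 1) ∧ (∀ v, v ∉ A → v ∉ B → G.net f {v} = 0) ∧
      G.net f A = m := by
  induction m with
  | zero => exact ⟨fun _ => 0, by simp, by simp [net], by simp [net]⟩
  | succ m ih =>
    obtain ⟨f, hf, hc, hv⟩ := ih (fun X h1 h2 => by have := hm X h1 h2; omega)
    rcases path_or_block G (fun e u => G.sgn e u * f e ≤ 0) A B with
      ⟨a, ha, b, hb, p, hp, hg⟩ | ⟨X, hAX, hBX, hX⟩
    · refine ⟨fun e => f e + p.chi e, ?_, ?_, ?_⟩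
      · intro e
        by_cases he : e ∈ p.edges
        · obtain ⟨x, h1, h2⟩ := p.chi_mem _ hp hg e he
          have := hf e
          simp only [h2]
          rcases G.sgn_cases e x with h | h <;> rw [h] at h1 ⊢ <;> omega
        · simpa [p.chi_not_mem e he] using hf e
      · intro v hvA hvB
        rw [net_add, net_chi, hc v hvA hvB]
        have h1 : a ≠ v := fun h => hvA (h ▸ ha)
        have h2 : b ≠ v := fun h => hvB (h ▸ hb)
        simp [ind, h1, h2]
      · rw [net_add, net_chi, hv]
        have : b ∉ A := fun h => hAB b h hb
        simp [ind, ha, this]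
    · exfalso
      have h1 := net_conserve G f A X hAX (fun v hvX hvA => hc v hvA (fun h => hBX v h hvX))
      have h2 : G.net f X = G.delta X := by
        rw [delta_sum]
        unfold net
        refine Finset.sum_congr rfl fun e _ => ?_
        have hb := hf e
        have hl := G.loopless e
        by_cases g1 : (G.ends e).1 ∈ X <;> by_cases g2 : (G.ends e).2 ∈ X
        · simp [ind, g1, g2]
        · have := hX e _ _ (Or.inl rfl) g1 g2
          simp only [sgn, if_true] at this
          simp [ind, g1, g2]; omega
        · have := hX e _ _ (Or.inr rfl) g2 g1
          simp only [sgn, if_neg hl] at this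
          simp [ind, g1, g2]; omega
        · simp [ind, g1, g2]
      have h3 := hm X hAX hBX
      rw [h1, hv] at h2
      omega

/-- Decomposition of a flow into walks. -/
lemma flow_decomp (G : Multigraph) (A B : Set G.V) (hAB : ∀ a ∈ A, a ∉ B) (m : ℕ) :
    ∀ f : G.E → ℤ, (∀ e, -1 ≤ f e ∧ f e ≤ 1) → (∀ v, v ∉ A → v ∉ B → G.net f {v} = 0) →
      G.net f A = m → 
    ∃ (s t : Fin m → G.V) (P : (i : Fin m) → G.Walk (s i) (t i)),
    (∀ i, s i ∈ A) ∧ (∀ i, t i ∈ B) ∧ (∀ i, (P i).support.Nodup) ∧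
    (∀ i j, i ≠ j → ∀ f, f ∈ (P i).edges → f ∉ (P j).edges) ∧
    ∀ i, ∀ e ∈ (P i).edges, f e ≠ 0 := by
  induction m with
  | zero =>
    intro f _ _ _
    exact ⟨fun i => i.elim0, fun i => i.elim0, fun i => i.elim0, fun i => i.elim0,
      fun i => i.elim0, fun i => i.elim0, fun i => i.elim0, fun i => i.elim0⟩
  | succ m ih =>
    intro f hf hc hv
    rcases path_or_block G (fun e u => G.sgn e u * f e = 1) A B with
      ⟨a, ha, b, hb, p, hp, hg⟩ | ⟨X, hAX, hBX, hX⟩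
    · have key : ∀ e ∈ p.edges, f e ≠ 0 ∧ f e + - p.chi e = 0 := by
        intro e he
        obtain ⟨x, h1, h2⟩ := p.chi_mem _ hp hg e he
        rcases G.sgn_cases e x with h | h <;> rw [h] at h1 h2 <;> rw [h2] <;> omega
      have key2 : ∀ e, e ∉ p.edges → f e + - p.chi e = f e := by
        intro e he
        simp [p.chi_not_mem e he]
      obtain ⟨s, t, P, hs, ht, hn, hd, hsup⟩ := ih (fun e => f e + - p.chi e) (by
          intro e
          by_cases he : e ∈ p.edges
          · simp [(key e he).2]
          · simpa [key2 e he] using hf e) (by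
          intro v hvA hvB
          rw [net_add, net_neg, net_chi, hc v hvA hvB]
          have h1 : a ≠ v := fun h => hvA (h ▸ ha)
          have h2 : b ≠ v := fun h => hvB (h ▸ hb)
          simp [ind, h1, h2]) (by
          rw [net_add, net_neg, net_chi, hv]
          have : b ∉ A := fun h => hAB b h hb
          simp [ind, ha, this])
      have hne : ∀ i, ∀ e ∈ (P i).edges, e ∉ p.edges := fun i e he hep =>
        hsup i e he (key e hep).2
      refine ⟨Fin.cons a s, Fin.cons b t, Fin.cons (α := fun i => G.Walk
        ((Fin.cons a s : Fin (m + 1) → G.V) i) ((Fin.cons b t : Fin (m + 1) → G.V) i)) p P,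
        ?_, ?_, ?_, ?_, ?_⟩
      · intro i; cases i using Fin.cases with
        | zero => exact ha
        | succ i => exact hs i
      · intro i; cases i using Fin.cases with
        | zero => exact hb
        | succ i => exact ht i
      · intro i; cases i using Fin.cases with
        | zero => exact hp
        | succ i => exact hn i
      · intro i j hij e hei hej
        cases i using Fin.cases with
        | zero =>
          cases j using Fin.cases with
          | zero => exact hij rfl
          | succ j => exact hne j e hej hei
        | succ i =>
          cases j using Fin.cases with
          | zero => exact hne i e hei hej
          | succ j => exact hd i j (fun h => hij (by rw [h])) e hei hej
      · intro i e he; cases i using Fin.cases with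
        | zero => exact (key e he).1
        | succ i =>
          have := hsup i e he
          rwa [key2 e (hne i e he)] at this
    · exfalso
      have h1 := net_conserve G f A X hAX (fun v hvX hvA => hc v hvA (fun h => hBX v h hvX))
      have h2 : G.net f X ≤ 0 := by
        refine Finset.sum_nonpos fun e _ => ?_
        have hb := hf e
        have hl := G.loopless e
        by_cases g1 : (G.ends e).1 ∈ X <;> by_cases g2 : (G.ends e).2 ∈ X
        · simp [ind, g1, g2]
        · have := hX e _ _ (Or.inl rfl) g1 g2
          simp only [sgn, if_true] at this
          simp [ind, g1, g2]; omega
        · have := hX e _ _ (Or.inr rfl) g2 g1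
          simp only [sgn, if_neg hl] at this
          simp [ind, g1, g2]; omega
        · simp [ind, g1, g2]
      rw [h1, hv] at h2
      omega

/-- Menger's theorem, edge version. -/
lemma menger (G : Multigraph) (A B : Set G.V) (hAB : ∀ a ∈ A, a ∉ B) (m : ℕ)
    (hm : ∀ X : Set G.V, A ⊆ X → (∀ b ∈ B, b ∉ X) → m ≤ G.delta X) :
    G.ConnectorBetween A B m := by
  obtain ⟨f, h1, h2, h3⟩ := exists_flow G A B hAB m hm
  obtain ⟨s, t, P, hs, ht, hn, hd, _⟩ := flow_decomp G A B hAB m f h1 h2 h3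
  exact ⟨s, t, P, hs, ht, hn, hd⟩

end Multigraph

namespace Multigraph

lemma chain_anti {V : Type} (T : ℕ → Set V) (N : ℕ) (h : ∀ i < N, T (i + 1) ⊂ T i) (i d : ℕ)
    (hj : i + d ≤ N) : T (i + d) ⊆ T i := by
  induction d with
  | zero => exact subset_rfl
  | succ d ih => exact (h (i + d) (by omega)).subset.trans (ih (by omega))

lemma chain (M : ℕ → ℕ) (K : ℕ) : ∃ N, ∀ {V : Type} (δ : Set V → ℕ) (T : ℕ → Set V),
    (∀ i < N, T (i + 1) ⊂ T i) → (∀ i ≤ N, δ (T i) ≤ K) →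
    ∃ m ≤ K, ∃ T' : ℕ → Set V, (∀ i < M m, T' (i + 1) ⊂ T' i) ∧ T' 0 ⊆ T 0 ∧
      (∀ i ≤ M m, δ (T' i) = m) ∧ ∀ X, T' (M m) ⊆ X → X ⊆ T' 0 → m ≤ δ X := by
  induction K with
  | zero =>
    refine ⟨M 0, fun δ T h1 h2 => ⟨0, le_rfl, T, h1, subset_rfl, ?_, fun _ _ _ => Nat.zero_le _⟩⟩
    intro i hi
    have := h2 i hi
    omega
  | succ K ih =>
    obtain ⟨N', hN'⟩ := ih
    set L := M (K + 1) with hL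
    refine ⟨(N' + 1) * (L + 1), fun {V} δ T h1 h2 => ?_⟩
    have hle : ∀ q ≤ N', q * (L + 1) + L + 1 ≤ (N' + 1) * (L + 1) := by
      intro q hq
      have : (q + 1) * (L + 1) ≤ (N' + 1) * (L + 1) := Nat.mul_le_mul_right _ (by omega)
      rw [add_mul q 1] at this
      omega
    by_cases hq : ∃ q ≤ N', ∀ X, T (q * (L + 1) + L) ⊆ X → X ⊆ T (q * (L + 1)) → K + 1 ≤ δ X
    · obtain ⟨q, hq, hX⟩ := hq
      have hq' := hle q hq
      refine ⟨K + 1, le_rfl, fun i => T (q * (L + 1) + i), ?_, ?_, ?_, ?_⟩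
      · intro i hi
        exact h1 (q * (L + 1) + i) (by omega)
      · have := chain_anti T _ h1 0 (q * (L + 1)) (by omega)
        simpa using this
      · intro i hi
        apply le_antisymm
        · exact h2 _ (by omega)
        · apply hX
          · have := chain_anti T _ h1 (q * (L + 1) + i) (L - i) (by omega)
            rwa [show q * (L + 1) + i + (L - i) = q * (L + 1) + L by omega] at this
          · exact chain_anti T _ h1 (q * (L + 1)) i (by omega)
      · intro X hX1 hX2
        exact hX X hX1 hX2
    · push Not at hq
      choose! X hX1 hX2 hX3 using hq
      obtain ⟨m, hm, T', g1, g2, g3, g4⟩ := hN' δ X (by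
          intro q hq
          have h := h1 (q * (L + 1) + L) (by have := hle q (by omega); omega)
          have e : q * (L + 1) + L + 1 = (q + 1) * (L + 1) := by ring
          rw [e] at h
          exact ((hX2 (q + 1) (by omega)).trans_ssubset h).trans_subset (hX1 q (by omega)))
        (fun q hq => by have := hX3 q hq; omega)
      refine ⟨m, by omega, T', g1, g2.trans ?_, g3, g4⟩
      have := hX2 0 (Nat.zero_le _)
      simpa using this

/-- Crossing edges of a set. -/
def Crosses (G : Multigraph) (S : Set G.V) (e : G.E) : Prop :=
  ¬ ((G.ends e).1 ∈ S ↔ (G.ends e).2 ∈ S)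

lemma Walk.exists_cross {G : Multigraph} {u v : G.V} (p : G.Walk u v) (S : Set G.V)
    (hu : u ∈ S) (hv : v ∉ S) : ∃ e ∈ p.edges, G.Crosses S e := by
  induction p with
  | nil w => exact absurd hu hv
  | @cons u v w e h p ih =>
    by_cases hvS : v ∈ S
    · obtain ⟨e', h1, h2⟩ := ih hvS hv
      exact ⟨e', List.mem_cons_of_mem _ h1, h2⟩
    · refine ⟨e, List.mem_cons_self, ?_⟩
      unfold Crosses
      rcases h with h | h <;> rw [h] <;> simp [hu, hvS]

lemma cross_unique (G : Multigraph) {m : ℕ} (s t : Fin m → G.V)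
    (P : (i : Fin m) → G.Walk (s i) (t i))
    (hd : ∀ i j, i ≠ j → ∀ f, f ∈ (P i).edges → f ∉ (P j).edges) (S : Set G.V)
    (hs : ∀ i, s i ∈ S) (ht : ∀ i, t i ∉ S) (hm : G.delta S = m) :
    ∃ (c : Fin m → G.E) (x : Fin m → S) (y : Fin m → ↥Sᶜ),
      (∀ p, G.ends (c p) = ((x p).1, (y p).1) ∨ G.ends (c p) = ((y p).1, (x p).1)) ∧
      (∀ e, G.Crosses S e → ∃ p, c p = e) ∧
      (∀ p, ∀ e ∈ (P p).edges, G.Crosses S e → e = c p) := by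
  choose c hc1 hc2 using fun i => (P i).exists_cross S (hs i) (ht i)
  have hinj : Function.Injective c := by
    intro i j hij
    by_contra hne
    exact hd i j hne (c i) (hc1 i) (hij ▸ hc1 j)
  have hsurj : ∀ e, G.Crosses S e → ∃ p, c p = e := by
    have h1 : (Set.range c) = {e | G.Crosses S e} := by
      refine Set.eq_of_subset_of_ncard_le ?_ ?_ (Set.toFinite _)
      · rintro _ ⟨p, rfl⟩; exact hc2 p
      · rw [← Set.image_univ, Set.ncard_image_of_injective _ hinj]
        simp only [Set.ncard_univ, Nat.card_eq_fintype_card, Fintype.card_fin]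
        exact le_of_eq hm
    intro e he
    have : e ∈ Set.range c := by rw [h1]; exact he
    exact this
  have hxy : ∀ p, ∃ x : S, ∃ y : ↥Sᶜ, 
      G.ends (c p) = (x.1, y.1) ∨ G.ends (c p) = (y.1, x.1) := by
    intro p
    have := hc2 p
    unfold Crosses at this
    by_cases h1 : (G.ends (c p)).1 ∈ S
    · exact ⟨⟨_, h1⟩, ⟨(G.ends (c p)).2, fun h2 => this ⟨fun _ => h2, fun _ => h1⟩⟩, Or.inl rfl⟩
    · have h2 : (G.ends (c p)).2 ∈ S := by tauto
      exact ⟨⟨_, h2⟩, ⟨(G.ends (c p)).1, h1⟩, Or.inr rfl⟩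
  choose x y hxy using hxy
  refine ⟨c, x, y, hxy, hsurj, ?_⟩
  intro p e he hcr
  obtain ⟨q, rfl⟩ := hsurj e hcr
  by_contra hne
  exact hd q p (fun h => hne (by rw [h])) _ (hc1 q) he

lemma Walk.last_visit {G : Multigraph} {a b : G.V} (p : G.Walk a b) (T : Set G.V) (hb : b ∉ T)
    (h : ∃ z ∈ p.support, z ∈ T) : ∃ x ∈ T, ∃ q : G.Walk x b, q.edges ⊆ p.edges ∧
      ∀ z ∈ q.support, z = x ∨ z ∉ T := by
  induction p with
  | nil w =>
    obtain ⟨z, hz, hzT⟩ := h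
    simp only [Walk.support, List.mem_singleton] at hz
    exact absurd (hz ▸ hzT) hb
  | @cons u v w e he p ih =>
    by_cases h' : ∃ z ∈ p.support, z ∈ T
    · obtain ⟨x, hx, q, h1, h2⟩ := ih hb h'
      exact ⟨x, hx, q, fun z hz => List.mem_cons_of_mem _ (h1 hz), h2⟩
    · push Not at h'
      obtain ⟨z, hz, hzT⟩ := h
      simp only [Walk.support, List.mem_cons] at hz
      have hzu : z = u := by
        rcases hz with hz | hz
        · exact hz
        · exact absurd hzT (h' z hz)
      subst hzu
      refine ⟨z, hzT, .cons e he p, fun _ h => h, ?_⟩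
      intro z' hz'
      simp only [Walk.support, List.mem_cons] at hz'
      rcases hz' with rfl | hz'
      · exact Or.inl rfl
      · exact Or.inr (h' _ hz')

lemma Walk.first_exit {G : Multigraph} {a b : G.V} (p : G.Walk a b) (S : Set G.V) (hb : b ∉ S) :
    ∃ y, y ∉ S ∧ ∃ q : G.Walk a y, q.edges ⊆ p.edges ∧ q.support ⊆ p.support ∧
      ∀ z ∈ q.support, z = y ∨ z ∈ S := by
  induction p with
  | nil w =>
    exact ⟨w, hb, .nil w, fun _ h => h, fun _ h => h, by simp [Walk.support]⟩
  | @cons u v w e he p ih =>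
    by_cases hu : u ∈ S
    · obtain ⟨y, hy, q, h1, h2, h3⟩ := ih hb
      refine ⟨y, hy, .cons e he q, List.cons_subset_cons _ h1, List.cons_subset_cons _ h2, ?_⟩
      intro z hz
      simp only [Walk.support, List.mem_cons] at hz
      rcases hz with rfl | hz
      · exact Or.inr hu
      · exact h3 z hz
    · refine ⟨u, hu, .nil u, by simp [Walk.edges], ?_, by simp [Walk.support]⟩
      intro z hz
      simp only [Walk.support, List.mem_singleton] at hz
      subst hz
      exact List.mem_cons_self

lemma Walk.exists_sub {G : Multigraph} {a b : G.V} (p : G.Walk a b) (T S : Set G.V)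
    (hTS : T ⊆ S) (ha : a ∈ T) (hb : b ∉ S) : ∃ x ∈ T, ∃ y, y ∉ S ∧ ∃ q : G.Walk x y,
      q.support.Nodup ∧ q.edges ⊆ p.edges ∧
      ∀ z ∈ q.support, (z = x ∨ z ∉ T) ∧ (z = y ∨ z ∈ S) := by
  obtain ⟨x, hx, q, h1, h2⟩ := p.last_visit T (fun h => hb (hTS h)) ⟨a, p.start_mem, ha⟩
  obtain ⟨y, hy, r, g1, g2, g3⟩ := q.first_exit S hb
  obtain ⟨o, k1, k2, k3, _⟩ := r.exists_path
  exact ⟨x, hx, y, hy, o, k1, fun z hz => h1 (g1 (k3 hz)),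
    fun z hz => ⟨h2 z (g2 (k2 hz)), g3 z (k2 hz)⟩⟩

/-- The single edge walk. -/
def edgeWalk (G : Multigraph) (e : G.E) : G.Walk (G.ends e).1 (G.ends e).2 :=
  .cons e (Or.inl rfl) (.nil _)

lemma edgeWalk_nodup (G : Multigraph) (e : G.E) : (G.edgeWalk e).support.Nodup := by
  simp [edgeWalk, Walk.support, G.loopless e]

lemma strong_splice (G : Multigraph) {m : ℕ} (s t : Fin m → G.V)
    (P : (i : Fin m) → G.Walk (s i) (t i))
    (hd : ∀ i j, i ≠ j → ∀ f, f ∈ (P i).edges → f ∉ (P j).edges) (T S : Set G.V) (hTS : T ⊆ S)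
    (hs : ∀ i, s i ∈ T) (ht : ∀ i, t i ∉ S) (x : Fin m → T) (y : Fin m → ↥Sᶜ)
    (c c' : Fin m → G.E) (x' : Fin m → S) (y' : Fin m → ↥Tᶜ)
    (hc : ∀ p, G.ends (c p) = ((x p).1, (y' p).1) ∨ G.ends (c p) = ((y' p).1, (x p).1))
    (hcu : ∀ p, ∀ e ∈ (P p).edges, G.Crosses T e → e = c p)
    (hc' : ∀ p, G.ends (c' p) = ((x' p).1, (y p).1) ∨ G.ends (c' p) = ((y p).1, (x' p).1))
    (hcu' : ∀ p, ∀ e ∈ (P p).edges, G.Crosses S e → e = c' p) :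
    StrongImmersion (join (G.induce T) (G.induce Sᶜ) x y) G := by
  have hQ : ∀ p, ∃ q : G.Walk (x p).1 (y p).1, q.support.Nodup ∧ q.edges ⊆ (P p).edges ∧
      ∀ z ∈ q.support, (z = (x p).1 ∨ z ∉ T) ∧ (z = (y p).1 ∨ z ∈ S) := by
    intro p
    obtain ⟨x0, hx0, y0, hy0, q, h1, h2, h3⟩ := (P p).exists_sub T S hTS (hs p) (ht p)
    have ex : x0 = (x p).1 := by
      obtain ⟨e, he, hcr⟩ := q.exists_cross T hx0 (fun h => hy0 (hTS h))
      have := hcu p e (h2 he) hcr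
      subst this
      have hm := q.ends_mem _ he
      have : (x p).1 ∈ q.support := by
        rcases hc p with h | h <;> rw [h] at hm
        · exact hm.1
        · exact hm.2
      rcases (h3 _ this).1 with h | h
      · exact h.symm
      · exact absurd (x p).2 h
    have ey : y0 = (y p).1 := by
      obtain ⟨e, he, hcr⟩ := q.exists_cross S (hTS hx0) hy0
      have := hcu' p e (h2 he) hcr
      subst this
      have hm := q.ends_mem _ he
      have : (y p).1 ∈ q.support := by
        rcases hc' p with h | h <;> rw [h] at hm
        · exact hm.2
        · exact hm.1
      rcases (h3 _ this).2 with h | h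
      · exact h.symm
      · exact absurd h (y p).2
    subst ex ey
    exact ⟨q, h1, h2, h3⟩
  choose Q hQ1 hQ2 hQ3 using hQ
  have hQT : ∀ p, ∀ e ∈ (Q p).edges, ¬ ((G.ends e).1 ∈ T ∧ (G.ends e).2 ∈ T) := by
    rintro p e he ⟨h1, h2⟩
    have hm := (Q p).ends_mem e he
    have a1 := (hQ3 p _ hm.1).1
    have a2 := (hQ3 p _ hm.2).1
    exact G.loopless e ((a1.resolve_right (not_not.2 h1)).trans
      (a2.resolve_right (not_not.2 h2)).symm)
  have hQS : ∀ p, ∀ e ∈ (Q p).edges, ¬ ((G.ends e).1 ∈ Sᶜ ∧ (G.ends e).2 ∈ Sᶜ) := by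
    rintro p e he ⟨h1, h2⟩
    have hm := (Q p).ends_mem e he
    have a1 := (hQ3 p _ hm.1).2
    have a2 := (hQ3 p _ hm.2).2
    exact G.loopless e ((a1.resolve_right h1).trans (a2.resolve_right h2).symm)
  let vm : T ⊕ ↥Sᶜ → G.V := Sum.elim Subtype.val Subtype.val
  let em : (e : (join (G.induce T) (G.induce Sᶜ) x y).E) →
      G.Walk (vm ((join (G.induce T) (G.induce Sᶜ) x y).ends e).1)
        (vm ((join (G.induce T) (G.induce Sᶜ) x y).ends e).2) := fun e =>
    match e with
    | Sum.inl (Sum.inl e) => G.edgeWalk e.1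
    | Sum.inl (Sum.inr e) => G.edgeWalk e.1
    | Sum.inr p => Q p
  have hmem : ∀ e f : G.E, f ∈ (G.edgeWalk e).edges → f = e := by
    intro e f h
    simpa [edgeWalk, Walk.edges] using h
  refine ⟨⟨⟨vm, ?_, em, ?_, ?_⟩, ?_⟩⟩
  · rintro (u | u) (v | v) h
    · exact congrArg Sum.inl (Subtype.ext h)
    · exact absurd (hTS u.2) (by have : u.1 = v.1 := h
                                 rw [this]; exact v.2)
    · exact absurd (hTS v.2) (by have : u.1 = v.1 := h
                                 rw [← this]; exact u.2)
    · exact congrArg Sum.inr (Subtype.ext h)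
  · rintro ((e | e) | p)
    · exact G.edgeWalk_nodup e.1
    · exact G.edgeWalk_nodup e.1
    · exact hQ1 p
  · rintro ((e | e) | p) ((e' | e') | p') hne f hf hf'
    · have h1 := hmem e.1 f hf
      have h2 := hmem e'.1 f hf'
      exact hne (congrArg (Sum.inl ∘ Sum.inl) (Subtype.ext (h1.symm.trans h2)))
    · have h1 := hmem e.1 f hf
      have h2 := hmem e'.1 f hf'
      have h3 : (G.ends e.1).1 ∈ Sᶜ := by rw [← h1, h2]; exact e'.2.1
      exact h3 (hTS e.2.1)
    · have h1 := hmem e.1 f hf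
      exact hQT p' f hf' (by rw [h1]; exact e.2)
    · have h1 := hmem e.1 f hf
      have h2 := hmem e'.1 f hf'
      have h3 : (G.ends e'.1).1 ∈ Sᶜ := by rw [← h2, h1]; exact e.2.1
      exact h3 (hTS e'.2.1)
    · have h1 := hmem e.1 f hf
      have h2 := hmem e'.1 f hf'
      exact hne (congrArg (Sum.inl ∘ Sum.inr) (Subtype.ext (h1.symm.trans h2)))
    · have h1 := hmem e.1 f hf
      exact hQS p' f hf' (by rw [h1]; exact e.2)
    · have h1 := hmem e'.1 f hf'
      exact hQT p f hf (by rw [h1]; exact e'.2)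
    · have h1 := hmem e'.1 f hf'
      exact hQS p f hf (by rw [h1]; exact e'.2)
    · exact hd p p' (fun h => hne (congrArg Sum.inr h)) f (hQ2 p hf) (hQ2 p' hf')
  · have hew : ∀ e z, z ∈ (G.edgeWalk e).support → z = (G.ends e).1 ∨ z = (G.ends e).2 := by
      intro e z h
      simpa [edgeWalk, Walk.support] using h
    rintro ((e | e) | p) z hz hz1 hz2
    · rcases hew e.1 z hz with h | h
      · exact absurd h hz1
      · exact absurd h hz2
    · rcases hew e.1 z hz with h | h
      · exact absurd h hz1
      · exact absurd h hz2
    · have h := hQ3 p z hz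
      have h1 := h.1.resolve_left hz1
      have h2 := h.2.resolve_left hz2
      rintro ⟨u | u, hu⟩
      · have : u.1 = z := hu
        exact h1 (this ▸ u.2)
      · have : u.1 = z := hu
        exact (this ▸ u.2 : z ∈ Sᶜ) h2

end Multigraph

namespace Multigraph

lemma lay_of_join (G : Multigraph) {m : ℕ} (k w : ℕ) (S : Set G.V) (x : Fin m → S)
    (y : Fin m → ↥Sᶜ) (c : Fin m → G.E)
    (hc : ∀ p, G.ends (c p) = ((x p).1, (y p).1) ∨ G.ends (c p) = ((y p).1, (x p).1))
    (hcs : ∀ e, G.Crosses S e → ∃ p, c p = e)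
    (h : ∃ F : Set (join (G.induce S) (G.induce Sᶜ) x y).E, F.ncard ≤ w ∧
      Lay (join (G.induce S) (G.induce Sᶜ) x y) F k) : dcw k G ≤ w := by
  obtain ⟨F, hF, hL⟩ := h
  let fv : (join (G.induce S) (G.induce Sᶜ) x y).V → G.V :=
    Sum.elim (fun v : S => v.1) (fun v : ↥Sᶜ => v.1)
  let fe : (join (G.induce S) (G.induce Sᶜ) x y).E → G.E :=
    Sum.elim (Sum.elim (fun e => e.1) (fun e => e.1)) c
  have h1 := lay_transfer (join (G.induce S) (G.induce Sᶜ) x y) G k fv fe ?_ ?_ ?_ F hL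
  · exact dcw_le_of G k w _ ((Set.ncard_image_le (Set.toFinite F)).trans hF) h1
  · constructor
    · rintro (u | u) (v | v) h
      · exact congrArg Sum.inl (Subtype.ext h)
      · exact absurd u.2 (by have : u.1 = v.1 := h
                             rw [this]; exact v.2)
      · exact absurd v.2 (by have : u.1 = v.1 := h
                             rw [← this]; exact u.2)
      · exact congrArg Sum.inr (Subtype.ext h)
    · intro v
      by_cases hv : v ∈ S
      · exact ⟨Sum.inl ⟨v, hv⟩, rfl⟩
      · exact ⟨Sum.inr ⟨v, hv⟩, rfl⟩
  · intro e
    by_cases he : G.Crosses S e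
    · obtain ⟨p, hp⟩ := hcs e he
      exact ⟨Sum.inr p, hp⟩
    · unfold Crosses at he
      rw [not_not] at he
      by_cases h1 : (G.ends e).1 ∈ S
      · exact ⟨Sum.inl (Sum.inl ⟨e, h1, he.1 h1⟩), rfl⟩
      · exact ⟨Sum.inl (Sum.inr ⟨e, h1, fun h => h1 (he.2 h)⟩), rfl⟩
  · rintro ((e | e) | p)
    · exact Or.inl rfl
    · exact Or.inl rfl
    · exact hc p

lemma no_chain (k : ℕ) : ∃ N : ℕ, ∀ (w : ℕ) (G : Multigraph),
    G ∈ obstructions StrongImmersion (dcwClass w k) → ∀ T : ℕ → Set G.V,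
    (∀ i < N, T (i + 1) ⊂ T i) → (∀ i ≤ N, G.delta (T i) ≤ 2 * k) →
    (∀ X ⊆ T 0, Lay (G.induce X) ∅ k) → False := by
  obtain ⟨N, hN⟩ := chain (fun m => Nat.card (Set (Entry k m))) (2 * k)
  refine ⟨N, fun w G hG T hT1 hT2 hL => ?_⟩
  obtain ⟨m, hm, T', g1, g2, g3, g4⟩ := hN G.delta T hT1 hT2
  set M := Nat.card (Set (Entry k m)) with hM
  have hanti : ∀ i j, i ≤ j → j ≤ M → T' j ⊆ T' i := by
    intro i j hij hj
    have := chain_anti T' M g1 i (j - i) (by omega)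
    rwa [show i + (j - i) = j by omega] at this
  obtain ⟨s, t, P, hs, ht, _, hd⟩ := menger G (T' M) (T' 0)ᶜ
    (fun a ha h => h (hanti 0 M (Nat.zero_le _) le_rfl ha)) m
    (fun X h1 h2 => g4 X h1 (fun z hz => by
      by_contra hz'
      exact h2 z hz' hz))
  have hcr : ∀ i : Fin (M + 1), ∃ (c : Fin m → G.E) (x : Fin m → T' i) (y : Fin m → ↥(T' i)ᶜ),
      (∀ p, G.ends (c p) = ((x p).1, (y p).1) ∨ G.ends (c p) = ((y p).1, (x p).1)) ∧
      (∀ e, G.Crosses (T' i) e → ∃ p, c p = e) ∧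
      (∀ p, ∀ e ∈ (P p).edges, G.Crosses (T' i) e → e = c p) := fun i =>
    cross_unique G s t P hd (T' i) (fun p => hanti i M (by omega) le_rfl (hs p))
      (fun p h => ht p (hanti 0 i (Nat.zero_le _) (by omega) h)) (g3 i (by omega))
  choose c x y hc1 hc2 hc3 using hcr
  have hpig : ∃ i j : Fin (M + 1), i < j ∧
      tp k (G.induce (T' j)) (x j) = tp k (G.induce (T' i)) (x i) := by
    by_contra hcon
    push Not at hcon
    have hinj : Function.Injective (fun i : Fin (M + 1) => tp k (G.induce (T' i)) (x i)) := by
      intro i j hij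
      rcases lt_trichotomy i j with h | h | h
      · exact absurd hij.symm (hcon i j h)
      · exact h
      · exact absurd hij (hcon j i h)
    have := Nat.card_le_card_of_injective _ hinj
    rw [Nat.card_eq_fintype_card, Fintype.card_fin, ← hM] at this
    omega
  obtain ⟨i, j, hij, htp⟩ := hpig
  have hij' : (i : ℕ) < j := hij
  have hss : T' j ⊂ T' i :=
    (hanti (i + 1) j (by omega) (by omega)).trans_ssubset (g1 i (by omega))
  have himm := strong_splice G s t P hd (T' j) (T' i) hss.subset
    (fun p => hanti j M (by omega) le_rfl (hs p))
    (fun p h => ht p (hanti 0 i (Nat.zero_le _) (by omega) h))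
    (x j) (y i) (c j) (c i) (x i) (y j) (hc1 j) (hc3 j) (hc1 i) (hc3 i)
  have hniso : ¬ (join (G.induce (T' j)) (G.induce (T' i)ᶜ) (x j) (y i)).Isomorphic G := by
    rintro ⟨φ⟩
    obtain ⟨⟨model, _⟩⟩ := himm
    obtain ⟨v, hv1, hv2⟩ := Set.exists_of_ssubset hss
    let vm : ↥(T' j) ⊕ ↥(T' i)ᶜ → G.V := Sum.elim (fun v => v.1) (fun v => v.1)
    have hvm : Function.Injective vm := by
      rintro (u | u) (v | v) h
      · exact congrArg Sum.inl (Subtype.ext h)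
      · exact absurd (hss.subset u.2) (by have : u.1 = v.1 := h
                                          rw [this]; exact v.2)
      · exact absurd (hss.subset v.2) (by have : u.1 = v.1 := h
                                          rw [← this]; exact u.2)
      · exact congrArg Sum.inr (Subtype.ext h)
    have hcard : Nat.card G.V ≤ Nat.card (↥(T' j) ⊕ ↥(T' i)ᶜ) :=
      (Nat.card_congr φ.fv).symm.le
    have hbij := hvm.bijective_of_nat_card_le hcard
    obtain ⟨u | u, hu⟩ := hbij.2 v
    · have : u.1 = v := hu
      exact hv2 (this ▸ u.2)
    · have : u.1 = v := hu
      exact (this ▸ u.2 : v ∈ (T' i)ᶜ) hv1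
  have hdc : dcw k (join (G.induce (T' j)) (G.induce (T' i)ᶜ) (x j) (y i)) ≤ w :=
    hG.2 _ himm hniso
  obtain ⟨F, hF, ρ, hρ, hcut⟩ := exists_of_dcw_le _ k w hdc
  have hex := exchange k (G.induce (T' i)) (G.induce (T' j)) (G.induce (T' i)ᶜ) (x i) (x j) (y i)
    htp (hL _ ((hanti 0 i (Nat.zero_le _) (by omega)).trans g2)) w
    ⟨F, hF, lay_of_rank _ F k ρ hρ hcut⟩
  exact hG.1 (lay_of_join G k w (T' i) (x i) (y i) (c i) (hc1 i) (hc2 i) hex)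

lemma cut_induce_le (G : Multigraph) (F : Set G.E) (X : Set G.V)
    (hX : ∀ e ∈ F, ¬ ((G.ends e).1 ∈ X)) (S : Set G.V) :
    (G.induce X).cut ∅ (Subtype.val ⁻¹' S : Set X) ≤ G.cut F S := by
  have h := Set.ncard_image_of_injective
    {e : {e : G.E // (G.ends e).1 ∈ X ∧ (G.ends e).2 ∈ X} |
      ¬ ((G.ends e.1).1 ∈ S ↔ (G.ends e.1).2 ∈ S)} Subtype.val_injective
  have e1 : (G.induce X).cut ∅ (Subtype.val ⁻¹' S : Set X) =
    {e : {e : G.E // (G.ends e).1 ∈ X ∧ (G.ends e).2 ∈ X} |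
      ¬ ((G.ends e.1).1 ∈ S ↔ (G.ends e.1).2 ∈ S)}.ncard := by
    unfold cut
    congr 1
    ext e
    constructor
    · intro h; exact h.2
    · intro h; exact ⟨fun h => h, h⟩
  rw [e1, ← h]
  refine Set.ncard_le_ncard ?_ (Set.toFinite _)
  rintro _ ⟨e, he, rfl⟩
  exact ⟨fun hF => hX e.1 hF e.2.1, he⟩

lemma obs_small (k w : ℕ) (G : Multigraph)
    (hG : G ∈ obstructions StrongImmersion (dcwClass w k)) :
    ∃ F : Set G.E, F.ncard ≤ w + 1 ∧ ∃ ρ : G.V → ℕ, Function.Injective ρ ∧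
      ∀ t, G.cut F {v | ρ v < t} ≤ k := by
  by_cases hE : Nonempty G.E
  · obtain ⟨e⟩ := hE
    have h1 : StrongImmersion (G.deleteEdges {e}) G := by
      refine ⟨⟨⟨fun v => v, fun _ _ h => h, fun f => G.edgeWalk f.1,
        fun f => G.edgeWalk_nodup f.1, ?_⟩, ?_⟩⟩
      · intro f f' hne g hg hg'
        have a1 : g = f.1 := by simpa [edgeWalk, Walk.edges] using hg
        have a2 : g = f'.1 := by simpa [edgeWalk, Walk.edges] using hg'
        exact hne (Subtype.ext (a1.symm.trans a2))
      · intro f z hz hz1 hz2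
        have hz' : z ∈ (G.edgeWalk f.1).support := hz
        have : z = (G.ends f.1).1 ∨ z = (G.ends f.1).2 := by
          simpa [edgeWalk, Walk.support] using hz'
        rcases this with h | h
        · exact absurd h hz1
        · exact absurd h hz2
    have h2 : ¬ (G.deleteEdges {e}).Isomorphic G := by
      rintro ⟨φ⟩
      have hcard : Nat.card G.E ≤ Nat.card {f : G.E // f ∉ ({e} : Set G.E)} :=
        (Nat.card_congr φ.fe).symm.le
      have hbij := (Subtype.val_injective (p := fun f : G.E => f ∉ ({e} : Set G.E))
        ).bijective_of_nat_card_le hcard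
      obtain ⟨f, hf⟩ := hbij.2 e
      exact f.2 hf
    obtain ⟨F0, hF0, ρ, hρ, hcut⟩ := exists_of_dcw_le _ k w (hG.2 _ h1 h2)
    let F1 : Set {f : G.E // f ∉ ({e} : Set G.E)} := F0
    refine ⟨insert e (Subtype.val '' F1), ?_, ρ, hρ, fun t => ?_⟩
    · refine (Set.ncard_insert_le _ _).trans ?_
      have := Set.ncard_image_le (f := Subtype.val) (Set.toFinite F1)
      have : F1.ncard ≤ w := hF0
      omega
    · refine le_trans ?_ (hcut t)
      have h := Set.ncard_image_of_injective
        {f : {f : G.E // f ∉ ({e} : Set G.E)} | f ∉ F1 ∧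
          ¬ ((G.ends f.1).1 ∈ {v | ρ v < t} ↔ (G.ends f.1).2 ∈ {v | ρ v < t})}
        Subtype.val_injective
      refine le_trans ?_ (le_of_eq h)
      refine Set.ncard_le_ncard ?_ (Set.toFinite _)
      rintro f ⟨hf1, hf2⟩
      have hfe : f ∉ ({e} : Set G.E) := fun h => hf1 (Or.inl h)
      exact ⟨⟨f, hfe⟩, ⟨fun h => hf1 (Or.inr ⟨_, h, rfl⟩), hf2⟩, rfl⟩
  · exfalso
    apply hG.1
    refine dcw_le_of G k w ∅ (by simp) ?_
    obtain ⟨n, ⟨φ⟩⟩ := Finite.exists_equiv_fin G.V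
    refine lay_of_rank G ∅ k (fun v => (φ v).val) (fun a b h => φ.injective (Fin.ext h)) ?_
    intro t
    have : {e : G.E | e ∉ (∅ : Set G.E) ∧ ¬ ((G.ends e).1 ∈ {v | (φ v).val < t} ↔
      (G.ends e).2 ∈ {v | (φ v).val < t})} = ∅ := by
      ext e; exact absurd ⟨e⟩ hE
    unfold cut
    rw [this]
    simp

lemma obs_bound (k : ℕ) : ∃ N : ℕ, ∀ w : ℕ, ∀ G : Multigraph,
    G ∈ obstructions StrongImmersion (dcwClass w k) →
    Nat.card G.V ≤ 2 * (w + 1) + (2 * (w + 1) + 1) * N := by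
  classical
  obtain ⟨N, hN⟩ := no_chain k
  refine ⟨N, fun w G hG => ?_⟩
  obtain ⟨F, hF, ρ, hρ, hcut⟩ := obs_small k w G hG
  by_contra hbig
  push Not at hbig
  let X : Finset G.V := Finset.univ.filter (fun v => ∃ e ∈ F, (G.ends e).1 = v ∨ (G.ends e).2 = v)
  have hXmem : ∀ v, v ∈ X ↔ ∃ e ∈ F, (G.ends e).1 = v ∨ (G.ends e).2 = v := by
    intro v; simp [X]
  have hXcard : X.card ≤ 2 * (w + 1) := by
    have h1 : X ⊆ (F.toFinset.image (fun e => (G.ends e).1)) ∪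
        (F.toFinset.image (fun e => (G.ends e).2)) := by
      intro v hv
      obtain ⟨e, he, h | h⟩ := (hXmem v).1 hv
      · exact Finset.mem_union_left _ (Finset.mem_image.2 ⟨e, Set.mem_toFinset.2 he, h⟩)
      · exact Finset.mem_union_right _ (Finset.mem_image.2 ⟨e, Set.mem_toFinset.2 he, h⟩)
    have h2 := (Finset.card_le_card h1).trans (Finset.card_union_le _ _)
    have h3 : F.toFinset.card ≤ w + 1 := by rwa [← Set.ncard_eq_toFinset_card']
    have h4 := Finset.card_image_le (s := F.toFinset) (f := fun e => (G.ends e).1)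
    have h5 := Finset.card_image_le (s := F.toFinset) (f := fun e => (G.ends e).2)
    omega
  let g : G.V → ℕ := fun v => (X.filter (fun x => ρ x < ρ v)).card
  have hg1 : ∀ v ∈ Xᶜ, g v ∈ Finset.range (2 * (w + 1) + 1) := by
    intro v _
    rw [Finset.mem_range]
    have : g v ≤ X.card := Finset.card_filter_le _ _
    omega
  have hcardc : (Finset.range (2 * (w + 1) + 1)).card * N < Xᶜ.card := by
    rw [Finset.card_range, Finset.card_compl, ← Nat.card_eq_fintype_card]
    omega
  obtain ⟨q, _, hq⟩ := Finset.exists_lt_card_fiber_of_mul_lt_card_of_maps_to hg1 hcardc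
  set I := Xᶜ.filter (fun v => g v = q) with hI
  have hImem : ∀ v, v ∈ I ↔ v ∉ X ∧ g v = q := by intro v; simp [hI]
  have hgmono : ∀ u v, ρ u ≤ ρ v → g u ≤ g v := by
    intro u v huv
    refine Finset.card_le_card ?_
    intro z hz
    rw [Finset.mem_filter] at hz ⊢
    exact ⟨hz.1, hz.2.trans_le huv⟩
  have hconv : ∀ u ∈ I, ∀ v ∈ I, ∀ z, ρ u ≤ ρ z → ρ z ≤ ρ v → z ∈ I := by
    intro u hu v hv z h1 h2
    rw [hImem] at hu hv ⊢
    have a1 := hgmono u z h1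
    have a2 := hgmono z v h2
    refine ⟨fun hz => ?_, by omega⟩
    have hzv : ρ z < ρ v := lt_of_le_of_ne h2 (fun h => hv.1 (hρ h ▸ hz))
    have : g u < g v := by
      refine Finset.card_lt_card ?_
      rw [Finset.ssubset_iff_of_subset]
      · refine ⟨z, Finset.mem_filter.2 ⟨hz, hzv⟩, ?_⟩
        rw [Finset.mem_filter]
        rintro ⟨_, h⟩
        omega
      · intro y hy
        rw [Finset.mem_filter] at hy ⊢
        exact ⟨hy.1, by omega⟩
    omega
  have hJ : N + 1 ≤ (I.image ρ).card := by
    rw [Finset.card_image_of_injective _ hρ]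
    exact hq
  obtain ⟨J, hJ1, hJ2⟩ := Finset.exists_subset_card_eq hJ
  let emb := J.orderEmbOfFin hJ2
  have hemb : ∀ i, ∃ v ∈ I, ρ v = emb i := by
    intro i
    have := hJ1 (J.orderEmbOfFin_mem hJ2 i)
    exact Finset.mem_image.1 this
  let τ : ℕ → ℕ := fun i => if h : i < N + 1 then emb ⟨i, h⟩ else 0
  have hτ : ∀ i ≤ N, ∃ v ∈ I, ρ v = τ i := by
    intro i hi
    obtain ⟨v, hv, h⟩ := hemb ⟨i, by omega⟩
    refine ⟨v, hv, ?_⟩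
    simp only [τ]
    rw [dif_pos (by omega)]
    exact h
  have hτlt : ∀ i j, i < j → j ≤ N → τ i < τ j := by
    intro i j hij hj
    simp only [τ]
    rw [dif_pos (by omega), dif_pos (by omega)]
    exact emb.strictMono hij
  have hτle : ∀ i ≤ N, τ i ≤ τ N := by
    intro i hi
    rcases hi.lt_or_eq with h | h
    · exact (hτlt i N h le_rfl).le
    · rw [h]
  have hTI : ∀ i ≤ N, ∀ v, τ i ≤ ρ v → ρ v ≤ τ N → v ∈ I := by
    intro i hi v h1 h2
    obtain ⟨a, ha, ha'⟩ := hτ i hi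
    obtain ⟨b, hb, hb'⟩ := hτ N le_rfl
    exact hconv a ha b hb v (by omega) (by omega)
  have hIF : ∀ e ∈ F, (G.ends e).1 ∉ I ∧ (G.ends e).2 ∉ I := by
    intro e he
    refine ⟨fun h => ((hImem _).1 h).1 ((hXmem _).2 ⟨e, he, Or.inl rfl⟩),
      fun h => ((hImem _).1 h).1 ((hXmem _).2 ⟨e, he, Or.inr rfl⟩)⟩
  refine hN w G hG (fun i => {v | τ i ≤ ρ v ∧ ρ v ≤ τ N}) ?_ ?_ ?_
  · intro i hi
    have hlt := hτlt i (i + 1) (by omega) (by omega)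
    refine (Set.ssubset_iff_of_subset ?_).2 ?_
    · rintro v ⟨h1, h2⟩
      exact ⟨by omega, h2⟩
    · obtain ⟨a, ha, ha'⟩ := hτ i (by omega)
      refine ⟨a, ⟨ha'.ge, ha' ▸ hτle i (by omega)⟩, ?_⟩
      rintro ⟨h, _⟩
      omega
  · intro i hi
    have h1 := hcut (τ i)
    have h2 := hcut (τ N + 1)
    have h3 : G.delta {v | τ i ≤ ρ v ∧ ρ v ≤ τ N} ≤
        G.cut F {v | ρ v < τ i} + G.cut F {v | ρ v < τ N + 1} := by
      unfold delta cut
      refine le_trans (Set.ncard_le_ncard ?_ (Set.toFinite _)) (Set.ncard_union_le _ _)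
      intro e he
      have heF : e ∉ F := by
        intro heF
        have := hIF e heF
        apply he
        constructor
        · rintro ⟨a, b⟩; exact absurd (hTI i hi _ a b) this.1
        · rintro ⟨a, b⟩; exact absurd (hTI i hi _ a b) this.2
      simp only [Set.mem_ofPred_eq, Set.mem_union] at he ⊢
      have hle := hτle i hi
      by_contra hcon
      apply he
      push Not at hcon
      have b1 := hcon.1 heF
      have b2 := hcon.2 heF
      omega
    omega
  · intro Y hY
    refine lay_of_rank (G.induce Y) ∅ k (fun v : Y => ρ v.1)
      (fun a b h => Subtype.ext (hρ h)) (fun t => ?_)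
    refine (cut_induce_le G F Y ?_ {v | ρ v < t}).trans (hcut t)
    intro e he hY'
    have := hY hY'
    exact (hIF e he).1 (hTI 0 (Nat.zero_le _) _ this.1 this.2)

end Multigraph

open Multigraph in
/-- for every `k` there are constants `c`, `d` such that every minimal
strong-immersion obstruction for `C_{w,k}` has at most `c·w + d` vertices. -/
theorem dcw_obstruction_linear_bound (k : ℕ) :
    ∃ c d : ℕ, ∀ w : ℕ, ∀ G : Multigraph,
      G ∈ obstructions StrongImmersion (dcwClass w k) →
      Nat.card G.V ≤ c * w + d := by
  obtain ⟨N, hN⟩ := obs_bound k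
  refine ⟨2 + 2 * N, 2 + 3 * N, fun w G hG => (hN w G hG).trans (le_of_eq ?_)⟩
  ring
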